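/- Fix x ∈ ℂ, θ ∈ [−π/8, π/8] and N ∈ ℕ. For y ∈ ℂ with Re y > 0 and k ∈ {1,2}, define E_k(x,y) := √(π/3)·2^{−5/6}·y^{−1/3}·exp( 3·4^{−4/3}·e^{−(−1)^k·2iπ/3}·y^{4/3} − 4^{−2/3}·x·y^{2/3}·e^{−(−1)^k·iπ/3} + x²/6 ) and S_{k,N}(x,y) := ∑_{n=0}^{N} e^{(−1)^k·(2n+1)·iπ/6} · A_n(x) · y^{−2n/3}, with principal-branch powers of y. Then, as r → ∞ along the positive reals, with y := r e^{iθ}: P(x,y) − E_1(x,y)·S_{1,N}(x,y) − E_2(x,y)·S_{2,N}(x,y) = O( (|E_1(x,y)| + |E_2(x,y)|) · r^{−2(N+1)/3} ). -/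

import Mathlib

open Real MeasureTheory Filter Asymptotics

/-- The Pearcey-type integral `P(x,y) = ∫₀^∞ exp(−t⁴ − x t²)·cos(y t) dt`. -/
noncomputable def P (x y : ℂ) : ℂ :=
  ∫ t in Set.Ioi (0 : ℝ), Complex.exp (-(t : ℂ) ^ 4 - x * (t : ℂ) ^ 2) * Complex.cos (y * t)

/-- The coefficients `a_{n,m,k}(x)`. -/
noncomputable def a (x : ℂ) (n m k : ℕ) : ℂ :=
  (-1) ^ m * x ^ k * (2 : ℂ) ^ ((4 * ((2 * m - n - k : ℕ) : ℂ)) / 3) /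
    ((k.factorial : ℂ) * ((2 * m - n - k).factorial : ℂ) * ((n - m).factorial : ℂ))

/-- The coefficients `c_n(x)`. -/
noncomputable def c (x : ℂ) (n : ℕ) : ℂ :=
  ∑ k ∈ Finset.range (n / 2 + 1),
    x ^ (n - 2 * k) *
      ((((3 : ℝ) ^ ((k : ℤ) - (n : ℤ)) * (2 : ℝ) ^ (-(n : ℝ) / 3 - (k : ℝ)) *
          (n.factorial : ℝ) / ((k.factorial : ℝ) * ((n - 2 * k).factorial : ℝ))) : ℝ) : ℂ)

/-- The coefficients `A_n(x)`. -/
noncomputable def A (x : ℂ) (n : ℕ) : ℂ :=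
  ∑ m ∈ Finset.Icc ((n + 1) / 2) n, ∑ k ∈ Finset.range (2 * m - n + 1),
    (-1) ^ (n + k) * a x n m k * c x (2 * m + n - k)

/-- `E_k(x,y) = √(π/3)·2^{−5/6}·y^{−1/3}·exp(3·4^{−4/3}·e^{−(−1)^k·2iπ/3}·y^{4/3}
− 4^{−2/3}·x·y^{2/3}·e^{−(−1)^k·iπ/3} + x²/6)` (principal powers of `y`). -/
noncomputable def E (x y : ℂ) (k : ℕ) : ℂ :=
  ((Real.sqrt (π / 3) : ℝ) : ℂ) * (((2 : ℝ) ^ (-(5 : ℝ) / 6) : ℝ) : ℂ) * y ^ (-(1 : ℂ) / 3) *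
    Complex.exp (3 * (4 : ℂ) ^ (-(4 : ℂ) / 3) *
        Complex.exp (-(-1 : ℂ) ^ k * 2 * (π : ℂ) * Complex.I / 3) * y ^ ((4 : ℂ) / 3)
      - (4 : ℂ) ^ (-(2 : ℂ) / 3) * x * y ^ ((2 : ℂ) / 3) *
        Complex.exp (-(-1 : ℂ) ^ k * (π : ℂ) * Complex.I / 3)
      + x ^ 2 / 6)

/-- `S_{k,N}(x,y) = ∑_{n=0}^{N} e^{(−1)^k (2n+1) iπ/6} A_n(x) y^{−2n/3}`. -/
noncomputable def S (x y : ℂ) (k N : ℕ) : ℂ :=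
  ∑ n ∈ Finset.range (N + 1),
    Complex.exp ((-1 : ℂ) ^ k * (2 * (n : ℂ) + 1) * (π : ℂ) * Complex.I / 6) * A x n *
      y ^ (-(2 * (n : ℂ)) / 3)

open scoped Topology Nat Pointwise ComplexConjugate

/-!
Since `P` is even in `y`, it is half the integral over `ℝ` of the entire function
`exp (-w ^ 4 - x * w ^ 2 + I * y * w)`. Two saddle points matter, one of this function and one of
its analogue for `-y`; to leading order they are `t = R * ω` with `R` proportional to
`|y| ^ (1 / 3)` and `‖ω‖ = 1`. Moving the line of integration to the height of a saddle point and
substituting `w = t + u / t` turns the integrand into a multiple of a Gaussian in `u` times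
`exp (α * ε + β * ε ^ 2)` with `ε = t⁻²` and polynomials `α`, `β` in `u`. Expanding in `ε` and
evaluating the Gaussian moments produces the series, whose coefficients are `A n` up to
normalization.

On the line through the saddle point of `y` (or `-y`) the Gaussian bound is uniform when
`4 * ω.re ^ 2 > 3`, which happens for the dominant saddle point as soon as `θ ≠ 0`; the other saddle
point is then exponentially negligible. For `θ = 0` both saddle points lie on the same level, with
`4 * ω.re ^ 2 = 3`, and the line splits at the imaginary axis into two half lines, each of which
sees only one saddle point.
-/

theorem hasDerivAt_sum_range_pow_div_factorial (n : ℕ) (z : ℂ) :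
    HasDerivAt (fun w : ℂ ↦ ∑ m ∈ Finset.range (n + 1), w ^ m / (m ! : ℂ))
      (∑ m ∈ Finset.range n, z ^ m / (m ! : ℂ)) z := by
  simp only [Finset.sum_range_succ' _ n, pow_zero]
  refine (HasDerivAt.fun_sum fun m _ ↦ ?_).add_const _
  refine ((hasDerivAt_pow (m + 1) z).div_const ((m + 1)! : ℂ)).congr_deriv ?_
  have : (m : ℂ) + 1 ≠ 0 := by exact_mod_cast m.succ_ne_zero
  push_cast [Nat.factorial_succ]
  field_simp

theorem norm_exp_sub_sum_range_le_exp_max (n : ℕ) (z : ℂ) :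
    ‖Complex.exp z - ∑ m ∈ Finset.range n, z ^ m / (m ! : ℂ)‖
      ≤ ‖z‖ ^ n * Real.exp (max 0 z.re) := by
  induction n generalizing z with
  | zero => simp [Complex.norm_exp]
  | succ n ih =>
    set K : Set ℂ := Metric.closedBall 0 ‖z‖ ∩ {w | w.re ≤ max 0 z.re}
    have hK : Convex ℝ K := (convex_closedBall 0 ‖z‖).inter (convex_halfSpace_re_le _)
    have hderiv : ∀ w ∈ K, HasDerivWithinAt
        (fun w : ℂ ↦ Complex.exp w - ∑ m ∈ Finset.range (n + 1), w ^ m / (m ! : ℂ))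
        (Complex.exp w - ∑ m ∈ Finset.range n, w ^ m / (m ! : ℂ)) K w := fun w _ ↦
      ((Complex.hasDerivAt_exp w).sub
        (hasDerivAt_sum_range_pow_div_factorial n w)).hasDerivWithinAt
    have hbound : ∀ w ∈ K, ‖Complex.exp w - ∑ m ∈ Finset.range n, w ^ m / (m ! : ℂ)‖
        ≤ ‖z‖ ^ n * Real.exp (max 0 z.re) := by
      rintro w ⟨hnorm, hre⟩
      rw [mem_closedBall_zero_iff] at hnorm
      refine (ih w).trans ?_
      gcongr ?_ ^ n * Real.exp ?_
      exact max_le (le_max_left 0 z.re) hre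
    have key := hK.norm_image_sub_le_of_norm_hasDerivWithin_le hderiv hbound
      (x := 0) (y := z) ⟨by simp, by simp⟩ ⟨by simp, by simp⟩
    have hzero : Complex.exp 0 - ∑ m ∈ Finset.range (n + 1), (0 : ℂ) ^ m / (m ! : ℂ) = 0 := by
      simp [Finset.sum_range_succ']
    rw [hzero, sub_zero, sub_zero] at key
    exact key.trans_eq (by ring)

theorem norm_exp_sub_sum_range_le (n : ℕ) (z : ℂ) :
    ‖Complex.exp z - ∑ m ∈ Finset.range n, z ^ m / (m ! : ℂ)‖
      ≤ ‖z‖ ^ n * (1 + Real.exp z.re) := by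
  refine (norm_exp_sub_sum_range_le_exp_max n z).trans ?_
  gcongr
  rcases max_choice 0 z.re with h | h <;> rw [h]
  · simpa using (Real.exp_pos _).le
  · simp

/-- The coefficient of `ε ^ n` in `exp (α * ε + β * ε ^ 2)`, that is, the two-variable Hermite
polynomial of degree `n` divided by `n !`. -/
noncomputable def expQuadCoeff (α β : ℂ) (n : ℕ) : ℂ :=
  ∑ j ∈ Finset.range (n / 2 + 1), α ^ (n - 2 * j) / ((n - 2 * j)! : ℂ) * (β ^ j / (j ! : ℂ))

section ExpQuad

variable (α β : ℂ)

theorem expQuadCoeff_zero : expQuadCoeff α β 0 = 1 := by simp [expQuadCoeff]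

theorem expQuadCoeff_one : expQuadCoeff α β 1 = α := by simp [expQuadCoeff]

theorem sum_range_pow_mul_expQuadCoeff (ε : ℂ) (N : ℕ) :
    ∑ n ∈ Finset.range (N + 1), ε ^ n * expQuadCoeff α β n =
      ∑ p ∈ Finset.range (N + 1) ×ˢ Finset.range (N + 1) with p.1 + 2 * p.2 ≤ N,
        (α * ε) ^ p.1 / (p.1 ! : ℂ) * ((β * ε ^ 2) ^ p.2 / (p.2 ! : ℂ)) := by
  rw [← Finset.sum_fiberwise_of_maps_to (t := Finset.range (N + 1))
    (g := fun p : ℕ × ℕ ↦ p.1 + 2 * p.2) (by simp +contextual)]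
  refine Finset.sum_congr rfl fun n hn ↦ ?_
  rw [Finset.mem_range, Nat.lt_succ_iff] at hn
  rw [expQuadCoeff, Finset.mul_sum]
  refine Finset.sum_nbij' (fun j ↦ (n - 2 * j, j)) Prod.snd ?_ ?_ ?_ ?_ ?_
  · intro j hj
    simp only [Finset.mem_range, Finset.mem_filter, Finset.mem_product] at hj ⊢
    omega
  · rintro ⟨i, j⟩ hij
    simp only [Finset.mem_range, Finset.mem_filter, Finset.mem_product] at hij ⊢
    omega
  · simp
  · rintro ⟨i, j⟩ hij
    simp only [Finset.mem_filter, Prod.mk.injEq, and_true] at hij ⊢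
    omega
  · intro j hj
    have : n = (n - 2 * j) + 2 * j := by rw [Finset.mem_range] at hj; omega
    rw [mul_pow, mul_pow, ← pow_mul]
    nth_rewrite 1 [this]
    rw [pow_add]
    ring

theorem sum_range_add_pow_div_factorial {K : Type*} [Field K] [CharZero K] (v w : K) (N : ℕ) :
    ∑ m ∈ Finset.range (N + 1), (v + w) ^ m / (m ! : K) =
      ∑ p ∈ Finset.range (N + 1) ×ˢ Finset.range (N + 1) with p.1 + p.2 ≤ N,
        v ^ p.1 / (p.1 ! : K) * (w ^ p.2 / (p.2 ! : K)) := by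
  rw [← Finset.sum_fiberwise_of_maps_to (t := Finset.range (N + 1)) (g := fun p : ℕ × ℕ ↦ p.1 + p.2)
    (by simp +contextual)]
  refine Finset.sum_congr rfl fun m hm ↦ ?_
  have hfiber : {p ∈ {p ∈ Finset.range (N + 1) ×ˢ Finset.range (N + 1) | p.1 + p.2 ≤ N} |
      p.1 + p.2 = m} = Finset.HasAntidiagonal.antidiagonal m := by
    ext p
    simp only [Finset.mem_filter, Finset.mem_product, Finset.mem_range,
      Finset.HasAntidiagonal.mem_antidiagonal] at hm ⊢
    omega
  rw [hfiber, (Commute.all v w).add_pow', Finset.sum_div]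
  refine Finset.sum_congr rfl fun p hp ↦ ?_
  rw [Finset.HasAntidiagonal.mem_antidiagonal] at hp
  rw [nsmul_eq_mul, ← hp, Nat.cast_add_choose]
  have hne (k : ℕ) : (k ! : K) ≠ 0 := mod_cast k.factorial_ne_zero
  field_simp [hne]

theorem sum_range_pow_div_factorial_le {s : ℝ} (hs : 0 ≤ s) (N : ℕ) :
    ∑ m ∈ Finset.range (N + 1), s ^ m / (m ! : ℝ) ≤ (1 + s) ^ N := by
  rw [add_comm 1 s, add_pow]
  refine Finset.sum_le_sum fun m hm ↦ ?_
  rw [one_pow, mul_one, div_eq_mul_inv]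
  gcongr
  rw [inv_le_iff_one_le_mul₀ (by positivity)]
  rw [Finset.mem_range, Nat.lt_succ_iff] at hm
  exact_mod_cast Nat.one_le_iff_ne_zero.2
    (mul_ne_zero (Nat.choose_pos hm).ne' m.factorial_ne_zero)

/-- The error made by passing from the exponential partial sum in `α * ε + β * ε ^ 2` to the
partial sum in powers of `ε` collects the pairs `(i, j)` with `i + j ≤ N < i + 2 * j`. -/
theorem norm_sum_range_sub_sum_expQuadCoeff_le {ε : ℂ} (hε : ‖ε‖ ≤ 1) (N : ℕ) :
    ‖∑ m ∈ Finset.range (N + 1), (α * ε + β * ε ^ 2) ^ m / (m ! : ℂ) -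
        ∑ n ∈ Finset.range (N + 1), ε ^ n * expQuadCoeff α β n‖
      ≤ ‖ε‖ ^ (N + 1) * (1 + ‖α‖ + ‖β‖) ^ N := by
  set B := Finset.range (N + 1) ×ˢ Finset.range (N + 1)
  have hsub : {p ∈ B | p.1 + 2 * p.2 ≤ N} ⊆ {p ∈ B | p.1 + p.2 ≤ N} :=
    Finset.monotone_filter_right _ fun p _ (hp : p.1 + 2 * p.2 ≤ N) ↦ by omega
  rw [sum_range_add_pow_div_factorial, sum_range_pow_mul_expQuadCoeff,
    ← Finset.sum_sdiff_eq_sub hsub]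
  calc ‖∑ p ∈ {p ∈ B | p.1 + p.2 ≤ N} \ {p ∈ B | p.1 + 2 * p.2 ≤ N},
        (α * ε) ^ p.1 / (p.1 ! : ℂ) * ((β * ε ^ 2) ^ p.2 / (p.2 ! : ℂ))‖
    _ ≤ ∑ p ∈ {p ∈ B | p.1 + p.2 ≤ N} \ {p ∈ B | p.1 + 2 * p.2 ≤ N},
        ‖ε‖ ^ (N + 1) * (‖α‖ ^ p.1 / (p.1 ! : ℝ) * (‖β‖ ^ p.2 / (p.2 ! : ℝ))) := by
      refine norm_sum_le_of_le _ fun p hp ↦ ?_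
      have hlt : N + 1 ≤ p.1 + 2 * p.2 := by
        simp only [Finset.mem_sdiff, Finset.mem_filter] at hp
        grind
      calc ‖(α * ε) ^ p.1 / (p.1 ! : ℂ) * ((β * ε ^ 2) ^ p.2 / (p.2 ! : ℂ))‖
        _ = ‖ε‖ ^ (p.1 + 2 * p.2) * (‖α‖ ^ p.1 / (p.1 ! : ℝ) * (‖β‖ ^ p.2 / (p.2 ! : ℝ))) := by
          simp only [norm_mul, norm_div, norm_pow, Complex.norm_natCast, pow_add, pow_mul, mul_pow]
          ring
        _ ≤ _ := by
          gcongr ?_ * _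
          exact pow_le_pow_of_le_one (norm_nonneg ε) hε hlt
    _ ≤ ‖ε‖ ^ (N + 1) * ∑ p ∈ B with p.1 + p.2 ≤ N,
        ‖α‖ ^ p.1 / (p.1 ! : ℝ) * (‖β‖ ^ p.2 / (p.2 ! : ℝ)) := by
      rw [Finset.mul_sum]
      exact Finset.sum_le_sum_of_subset_of_nonneg Finset.sdiff_subset fun _ _ _ ↦ by positivity
    _ ≤ ‖ε‖ ^ (N + 1) * (1 + ‖α‖ + ‖β‖) ^ N := by
      rw [← sum_range_add_pow_div_factorial, add_assoc]
      gcongr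
      exact sum_range_pow_div_factorial_le (by positivity) N

theorem norm_sum_range_pow_mul_expQuadCoeff_le {ε : ℂ} (hε : ‖ε‖ ≤ 1) (N : ℕ) :
    ‖∑ n ∈ Finset.range (N + 1), ε ^ n * expQuadCoeff α β n‖ ≤ (1 + ‖α‖ + ‖β‖) ^ N := by
  have hα : ‖α * ε‖ ≤ ‖α‖ := by
    rw [norm_mul]
    exact mul_le_of_le_one_right (norm_nonneg α) hε
  have hβ : ‖β * ε ^ 2‖ ≤ ‖β‖ := by
    rw [norm_mul, norm_pow]
    exact mul_le_of_le_one_right (norm_nonneg β) (pow_le_one₀ (norm_nonneg ε) hε)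
  rw [sum_range_pow_mul_expQuadCoeff]
  calc ‖∑ p ∈ Finset.range (N + 1) ×ˢ Finset.range (N + 1) with p.1 + 2 * p.2 ≤ N,
        (α * ε) ^ p.1 / (p.1 ! : ℂ) * ((β * ε ^ 2) ^ p.2 / (p.2 ! : ℂ))‖
    _ ≤ ∑ p ∈ Finset.range (N + 1) ×ˢ Finset.range (N + 1) with p.1 + 2 * p.2 ≤ N,
        ‖α‖ ^ p.1 / (p.1 ! : ℝ) * (‖β‖ ^ p.2 / (p.2 ! : ℝ)) := by
      refine norm_sum_le_of_le _ fun p _ ↦ ?_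
      rw [norm_mul, norm_div, norm_div, norm_pow, norm_pow, Complex.norm_natCast,
        Complex.norm_natCast]
      gcongr
    _ ≤ ∑ p ∈ Finset.range (N + 1) ×ˢ Finset.range (N + 1) with p.1 + p.2 ≤ N,
        ‖α‖ ^ p.1 / (p.1 ! : ℝ) * (‖β‖ ^ p.2 / (p.2 ! : ℝ)) := by
      refine Finset.sum_le_sum_of_subset_of_nonneg ?_ fun _ _ _ ↦ by positivity
      exact Finset.monotone_filter_right _ fun p _ (hp : p.1 + 2 * p.2 ≤ N) ↦ by omega
    _ ≤ (1 + ‖α‖ + ‖β‖) ^ N := by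
      rw [← sum_range_add_pow_div_factorial, add_assoc]
      exact sum_range_pow_div_factorial_le (by positivity) N

theorem norm_exp_sub_sum_expQuadCoeff_le {ε : ℂ} (hε : ‖ε‖ ≤ 1) (N : ℕ) :
    ‖Complex.exp (α * ε + β * ε ^ 2) - ∑ n ∈ Finset.range (N + 1), ε ^ n * expQuadCoeff α β n‖
      ≤ ‖ε‖ ^ (N + 1) * (1 + ‖α‖ + ‖β‖) ^ (N + 1) *
        (2 + Real.exp (α * ε + β * ε ^ 2).re) := by
  set z := α * ε + β * ε ^ 2
  set M := 1 + ‖α‖ + ‖β‖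
  have hM1 : 1 ≤ M := by linarith [norm_nonneg α, norm_nonneg β]
  have hzM : ‖z‖ ≤ ‖ε‖ * M := by
    calc ‖z‖ ≤ ‖ε‖ * (‖α‖ + ‖ε‖ * ‖β‖) := by
          refine (norm_add_le _ _).trans_eq ?_
          rw [norm_mul, norm_mul, norm_pow]
          ring
      _ ≤ ‖ε‖ * M := by
          gcongr
          linarith [mul_le_of_le_one_left (norm_nonneg β) hε]
  calc ‖Complex.exp z - ∑ n ∈ Finset.range (N + 1), ε ^ n * expQuadCoeff α β n‖
    _ ≤ ‖Complex.exp z - ∑ m ∈ Finset.range (N + 1), z ^ m / (m ! : ℂ)‖ +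
        ‖∑ m ∈ Finset.range (N + 1), z ^ m / (m ! : ℂ) -
          ∑ n ∈ Finset.range (N + 1), ε ^ n * expQuadCoeff α β n‖ :=
      norm_sub_le_norm_sub_add_norm_sub ..
    _ ≤ (‖ε‖ * M) ^ (N + 1) * (1 + Real.exp z.re) + ‖ε‖ ^ (N + 1) * M ^ (N + 1) := by
      gcongr
      · exact (norm_exp_sub_sum_range_le (N + 1) z).trans (by gcongr)
      · refine (norm_sum_range_sub_sum_expQuadCoeff_le α β hε N).trans ?_
        gcongr
        exact N.le_succ
    _ = ‖ε‖ ^ (N + 1) * M ^ (N + 1) * (2 + Real.exp z.re) := by rw [mul_pow]; ring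

end ExpQuad

theorem norm_expQuadCoeff_le (α β : ℂ) (n : ℕ) :
    ‖expQuadCoeff α β n‖ ≤ 2 * (1 + ‖α‖ + ‖β‖) ^ n := by
  have hpartial := norm_sum_range_pow_mul_expQuadCoeff_le α β (ε := 1) (by simp)
  simp only [one_pow, one_mul] at hpartial
  cases n with
  | zero => norm_num [expQuadCoeff_zero]
  | succ n =>
    have hM : 1 ≤ 1 + ‖α‖ + ‖β‖ := by linarith [norm_nonneg α, norm_nonneg β]
    rw [eq_sub_of_add_eq' (Finset.sum_range_succ (expQuadCoeff α β) (n + 1)).symm]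
    calc ‖∑ m ∈ Finset.range (n + 1 + 1), expQuadCoeff α β m -
          ∑ m ∈ Finset.range (n + 1), expQuadCoeff α β m‖
      _ ≤ (1 + ‖α‖ + ‖β‖) ^ (n + 1) + (1 + ‖α‖ + ‖β‖) ^ n :=
        norm_sub_le_of_le (hpartial (n + 1)) (hpartial n)
      _ ≤ (1 + ‖α‖ + ‖β‖) ^ (n + 1) + (1 + ‖α‖ + ‖β‖) ^ (n + 1) := by
        gcongr
        exact n.le_succ
      _ = 2 * (1 + ‖α‖ + ‖β‖) ^ (n + 1) := by ring

theorem norm_mul_exp_sub_sum_expQuadCoeff_le {g α β ε : ℂ} {G : ℝ} (hε : ‖ε‖ ≤ 1) (N : ℕ)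
    (hg : ‖g‖ ≤ G) (hgexp : ‖g * Complex.exp (α * ε + β * ε ^ 2)‖ ≤ G) :
    ‖g * Complex.exp (α * ε + β * ε ^ 2) -
        g * ∑ n ∈ Finset.range (N + 1), ε ^ n * expQuadCoeff α β n‖
      ≤ 3 * ‖ε‖ ^ (N + 1) * ((1 + ‖α‖ + ‖β‖) ^ (N + 1) * G) := by
  rw [norm_mul, Complex.norm_exp] at hgexp
  rw [← mul_sub, norm_mul]
  calc ‖g‖ * ‖Complex.exp (α * ε + β * ε ^ 2) -
        ∑ n ∈ Finset.range (N + 1), ε ^ n * expQuadCoeff α β n‖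
    _ ≤ ‖g‖ * (‖ε‖ ^ (N + 1) * (1 + ‖α‖ + ‖β‖) ^ (N + 1) *
        (2 + Real.exp (α * ε + β * ε ^ 2).re)) := by
      gcongr
      exact norm_exp_sub_sum_expQuadCoeff_le _ _ hε N
    _ = ‖ε‖ ^ (N + 1) * (1 + ‖α‖ + ‖β‖) ^ (N + 1) *
        (2 * ‖g‖ + ‖g‖ * Real.exp (α * ε + β * ε ^ 2).re) := by ring
    _ ≤ ‖ε‖ ^ (N + 1) * (1 + ‖α‖ + ‖β‖) ^ (N + 1) * (2 * G + G) := by gcongr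
    _ = 3 * ‖ε‖ ^ (N + 1) * ((1 + ‖α‖ + ‖β‖) ^ (N + 1) * G) := by ring

theorem norm_mul_sum_expQuadCoeff_le_of_one_le_norm_mul {g α β ε : ℂ} {G ρ : ℝ} (hε : ‖ε‖ ≤ 1)
    (N : ℕ) (hg : ‖g‖ ≤ G) (hερ : 1 ≤ ‖ε‖ * ρ) :
    ‖g * ∑ n ∈ Finset.range (N + 1), ε ^ n * expQuadCoeff α β n‖
      ≤ ‖ε‖ ^ (N + 1) * (((1 + ‖α‖ + ‖β‖) * ρ) ^ (N + 1) * G) := by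
  have hG : 0 ≤ G := (norm_nonneg _).trans hg
  have hM : 1 ≤ 1 + ‖α‖ + ‖β‖ := by linarith [norm_nonneg α, norm_nonneg β]
  calc ‖g * ∑ n ∈ Finset.range (N + 1), ε ^ n * expQuadCoeff α β n‖
    _ ≤ G * (1 + ‖α‖ + ‖β‖) ^ N := by
      rw [norm_mul]
      gcongr
      exact norm_sum_range_pow_mul_expQuadCoeff_le _ _ hε N
    _ ≤ G * (1 + ‖α‖ + ‖β‖) ^ (N + 1) * 1 := by
      rw [mul_one]
      gcongr
      exact N.le_succ
    _ ≤ G * (1 + ‖α‖ + ‖β‖) ^ (N + 1) * (‖ε‖ * ρ) ^ (N + 1) := by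
      gcongr
      exact one_le_pow₀ hερ
    _ = ‖ε‖ ^ (N + 1) * (((1 + ‖α‖ + ‖β‖) * ρ) ^ (N + 1) * G) := by
      simp only [mul_pow]
      ring

section PerturbedIntegral

variable {X : Type*} {g α β : X → ℂ} {G ρ : X → ℝ} {D : Set X} {ε : ℂ}

theorem norm_indicator_exp_sub_sum_expQuadCoeff_le (hε : ‖ε‖ ≤ 1) (N : ℕ)
    (hg : ∀ p, ‖g p‖ ≤ G p) (hgexp : ∀ p ∈ D, ‖g p * Complex.exp (α p * ε + β p * ε ^ 2)‖ ≤ G p)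
    (hρ : ∀ p, 0 ≤ ρ p) (hDρ : ∀ p ∉ D, 1 ≤ ‖ε‖ * ρ p) (p : X) :
    ‖D.indicator (fun p ↦ g p * Complex.exp (α p * ε + β p * ε ^ 2)) p -
        g p * ∑ n ∈ Finset.range (N + 1), ε ^ n * expQuadCoeff (α p) (β p) n‖
      ≤ 3 * ‖ε‖ ^ (N + 1) * (((1 + ‖α p‖ + ‖β p‖) * (1 + ρ p)) ^ (N + 1) * G p) := by
  have hG : 0 ≤ G p := (norm_nonneg _).trans (hg p)
  have hρp := hρ p
  by_cases hp : p ∈ D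
  · rw [Set.indicator_of_mem hp]
    refine (norm_mul_exp_sub_sum_expQuadCoeff_le hε N (hg p) (hgexp p hp)).trans ?_
    gcongr
    exact le_mul_of_one_le_right (by positivity) (by linarith)
  · rw [Set.indicator_of_notMem hp, zero_sub, norm_neg]
    refine (norm_mul_sum_expQuadCoeff_le_of_one_le_norm_mul hε N (hg p) (hDρ p hp)).trans ?_
    gcongr
    · exact le_mul_of_one_le_left (by positivity) (by norm_num)
    · linarith

variable [MeasurableSpace X] {μ : Measure X}

theorem integrable_mul_expQuadCoeff {N n : ℕ} (hn : n ≤ N) (hg_meas : AEStronglyMeasurable g μ)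
    (hα : AEStronglyMeasurable α μ) (hβ : AEStronglyMeasurable β μ) (hg : ∀ p, ‖g p‖ ≤ G p)
    (hG : Integrable (fun p ↦ (1 + ‖α p‖ + ‖β p‖) ^ N * G p) μ) :
    Integrable (fun p ↦ g p * expQuadCoeff (α p) (β p) n) μ := by
  refine (hG.const_mul 2).mono' ?_ (ae_of_all _ fun p ↦ ?_)
  · unfold expQuadCoeff
    fun_prop
  · have hM : 1 ≤ 1 + ‖α p‖ + ‖β p‖ := by linarith [norm_nonneg (α p), norm_nonneg (β p)]
    calc ‖g p * expQuadCoeff (α p) (β p) n‖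
      _ ≤ G p * (2 * (1 + ‖α p‖ + ‖β p‖) ^ n) := by
        rw [norm_mul]
        gcongr
        · exact (norm_nonneg _).trans (hg p)
        · exact hg p
        · exact norm_expQuadCoeff_le _ _ n
      _ ≤ G p * (2 * (1 + ‖α p‖ + ‖β p‖) ^ N) := by
        gcongr
        exact (norm_nonneg _).trans (hg p)
      _ = 2 * ((1 + ‖α p‖ + ‖β p‖) ^ N * G p) := by ring

theorem norm_setIntegral_exp_sub_sum_expQuadCoeff_le (hε : ‖ε‖ ≤ 1) (N : ℕ)
    (hD : MeasurableSet D) (hg_meas : AEStronglyMeasurable g μ) (hα : AEStronglyMeasurable α μ)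
    (hβ : AEStronglyMeasurable β μ) (hg : ∀ p, ‖g p‖ ≤ G p)
    (hgexp : ∀ p ∈ D, ‖g p * Complex.exp (α p * ε + β p * ε ^ 2)‖ ≤ G p)
    (hρ : ∀ p, 0 ≤ ρ p) (hDρ : ∀ p ∉ D, 1 ≤ ‖ε‖ * ρ p)
    (hG_meas : AEStronglyMeasurable G μ)
    (hG : Integrable (fun p ↦ ((1 + ‖α p‖ + ‖β p‖) * (1 + ρ p)) ^ (N + 1) * G p) μ) :
    ‖∫ p in D, g p * Complex.exp (α p * ε + β p * ε ^ 2) ∂μ -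
        ∑ n ∈ Finset.range (N + 1), ε ^ n * ∫ p, g p * expQuadCoeff (α p) (β p) n ∂μ‖
      ≤ 3 * ‖ε‖ ^ (N + 1) * ∫ p, ((1 + ‖α p‖ + ‖β p‖) * (1 + ρ p)) ^ (N + 1) * G p ∂μ := by
  have hG₀ (p : X) : 0 ≤ G p := (norm_nonneg _).trans (hg p)
  have hM (p : X) : 1 ≤ 1 + ‖α p‖ + ‖β p‖ := by linarith [norm_nonneg (α p), norm_nonneg (β p)]
  have hle (p : X) : (1 + ‖α p‖ + ‖β p‖) ^ (N + 1) * G p ≤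
      ((1 + ‖α p‖ + ‖β p‖) * (1 + ρ p)) ^ (N + 1) * G p := by
    gcongr
    · exact hG₀ p
    · exact le_mul_of_one_le_right (by linarith [hM p]) (by linarith [hρ p])
  have hG₁ : Integrable (fun p ↦ (1 + ‖α p‖ + ‖β p‖) ^ (N + 1) * G p) μ :=
    hG.mono' (by fun_prop) (ae_of_all _ fun p ↦ by
      rw [Real.norm_of_nonneg (mul_nonneg (by positivity) (hG₀ p))]; exact hle p)
  have hcoeff : ∀ n ∈ Finset.range (N + 1),
      Integrable (fun p ↦ ε ^ n * (g p * expQuadCoeff (α p) (β p) n)) μ := fun n hn ↦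
    (integrable_mul_expQuadCoeff (Finset.mem_range.1 hn).le hg_meas hα hβ hg hG₁).const_mul _
  have hsum (p : X) : g p * ∑ n ∈ Finset.range (N + 1), ε ^ n * expQuadCoeff (α p) (β p) n =
      ∑ n ∈ Finset.range (N + 1), ε ^ n * (g p * expQuadCoeff (α p) (β p) n) := by
    rw [Finset.mul_sum]
    exact Finset.sum_congr rfl fun n _ ↦ by ring
  have hDexp : IntegrableOn (fun p ↦ g p * Complex.exp (α p * ε + β p * ε ^ 2)) D μ := by
    refine hG₁.integrableOn.mono' (by fun_prop) ?_
    filter_upwards [ae_restrict_mem hD] with p hp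
    exact (hgexp p hp).trans (le_mul_of_one_le_left (hG₀ p) (one_le_pow₀ (hM p)))
  rw [← integral_indicator hD]
  simp only [← integral_const_mul]
  rw [← integral_finsetSum _ hcoeff, ← integral_sub (hDexp.integrable_indicator hD)
    (integrable_finsetSum _ hcoeff)]
  refine norm_integral_le_of_norm_le (hG.const_mul _) (ae_of_all _ fun p ↦ ?_)
  rw [← hsum]
  exact norm_indicator_exp_sub_sum_expQuadCoeff_le hε N hg hgexp hρ hDρ p

end PerturbedIntegral

theorem succ_mul_pow_succ_div_factorial (z : ℂ) (n : ℕ) :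
    ((n + 1 : ℕ) : ℂ) * (z ^ (n + 1) / ((n + 1)! : ℂ)) = z * (z ^ n / (n ! : ℂ)) := by
  have : ((n + 1 : ℕ) : ℂ) ≠ 0 := by exact_mod_cast n.succ_ne_zero
  rw [Nat.factorial_succ, Nat.cast_mul, pow_succ']
  field_simp

theorem expQuadCoeff_add_two (α β : ℂ) (n : ℕ) :
    ((n : ℂ) + 2) * expQuadCoeff α β (n + 2) =
      α * expQuadCoeff α β (n + 1) + 2 * β * expQuadCoeff α β n := by
  set s : ℕ → ℂ := fun i ↦ α ^ i / (i ! : ℂ)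
  set t : ℕ → ℂ := fun j ↦ β ^ j / (j ! : ℂ)
  have hsplit : ((n : ℂ) + 2) * expQuadCoeff α β (n + 2) =
      ∑ j ∈ Finset.range (n / 2 + 2), ((n + 2 - 2 * j : ℕ) : ℂ) * s (n + 2 - 2 * j) * t j +
        ∑ j ∈ Finset.range (n / 2 + 2), 2 * s (n + 2 - 2 * j) * ((j : ℂ) * t j) := by
    rw [expQuadCoeff, show (n + 2) / 2 + 1 = n / 2 + 2 by omega, Finset.mul_sum,
      ← Finset.sum_add_distrib]
    refine Finset.sum_congr rfl fun j hj ↦ ?_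
    have : 2 * j ≤ n + 2 := by rw [Finset.mem_range] at hj; omega
    push_cast [Nat.cast_sub this]
    ring
  have hfst : ∑ j ∈ Finset.range (n / 2 + 2), ((n + 2 - 2 * j : ℕ) : ℂ) * s (n + 2 - 2 * j) * t j =
      α * expQuadCoeff α β (n + 1) := by
    rw [expQuadCoeff, Finset.mul_sum]
    symm
    refine Finset.sum_subset_zero_on_sdiff (Finset.range_mono (by omega)) (fun j hj ↦ ?_)
      fun j hj ↦ ?_
    · have : n + 2 - 2 * j = 0 := by
        simp only [Finset.mem_sdiff, Finset.mem_range] at hj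
        omega
      rw [this, Nat.cast_zero, zero_mul, zero_mul]
    · have : n + 2 - 2 * j = n + 1 - 2 * j + 1 := by rw [Finset.mem_range] at hj; omega
      rw [this, succ_mul_pow_succ_div_factorial]
      ring
  have hsnd : ∑ j ∈ Finset.range (n / 2 + 2), 2 * s (n + 2 - 2 * j) * ((j : ℂ) * t j) =
      2 * β * expQuadCoeff α β n := by
    rw [expQuadCoeff, Finset.sum_range_succ', Nat.cast_zero, zero_mul, mul_zero, add_zero,
      Finset.mul_sum]
    refine Finset.sum_congr rfl fun j _ ↦ ?_
    rw [succ_mul_pow_succ_div_factorial, show n + 2 - 2 * (j + 1) = n - 2 * j by omega]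
    ring
  rw [hsplit, hfst, hsnd]

theorem expQuadCoeff_smul (s α β : ℂ) (n : ℕ) :
    expQuadCoeff (s * α) (s ^ 2 * β) n = s ^ n * expQuadCoeff α β n := by
  rw [expQuadCoeff, expQuadCoeff, Finset.mul_sum]
  refine Finset.sum_congr rfl fun j hj ↦ ?_
  have hn : n = n - 2 * j + 2 * j := by rw [Finset.mem_range] at hj; omega
  have hpow : s ^ n = s ^ (n - 2 * j) * (s ^ 2) ^ j := by rw [← pow_mul, ← pow_add, ← hn]
  rw [hpow, mul_pow, mul_pow]
  ring

section GaussianMoments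

theorem integrable_exp_neg_mul_sq_add_mul_abs {κ : ℝ} (hκ : 0 < κ) (B : ℝ) :
    Integrable fun p : ℝ ↦ Real.exp (-κ * p ^ 2 + B * |p|) := by
  have hlin (B : ℝ) : Integrable fun p : ℝ ↦ Real.exp (-κ * p ^ 2 + B * p) := by
    simpa [Complex.norm_exp, ← Complex.ofReal_pow, ← Complex.ofReal_mul, ← Complex.ofReal_neg] using
      (integrable_cexp_quadratic' (b := -(κ : ℂ)) (by simpa using hκ) B 0).norm
  refine ((hlin B).add (hlin (-B))).mono' (by fun_prop) (ae_of_all _ fun p ↦ ?_)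
  rw [Real.norm_of_nonneg (Real.exp_pos _).le]
  rcases abs_choice p with h | h <;> rw [h]
  · exact le_add_of_nonneg_right (Real.exp_pos _).le
  · rw [mul_neg, ← neg_mul]
    exact le_add_of_nonneg_left (Real.exp_pos _).le

theorem abs_pow_le_factorial_mul_exp_abs (p : ℝ) (q : ℕ) : |p| ^ q ≤ q ! * Real.exp |p| := by
  rw [mul_comm, ← div_le_iff₀ (by positivity)]
  exact Real.pow_div_factorial_le_exp |p| (abs_nonneg p) q

variable {b : ℂ}

theorem integrable_pow_mul_cexp_quadratic (hb : 0 < b.re) (s : ℂ) (q : ℕ) :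
    Integrable fun p : ℝ ↦ (p : ℂ) ^ q * Complex.exp (-b * p ^ 2 + s * p) := by
  refine ((integrable_exp_neg_mul_sq_add_mul_abs hb (|s.re| + 1)).const_mul (q ! : ℝ)).mono'
    (by fun_prop) (ae_of_all _ fun p ↦ ?_)
  have hre : (-b * p ^ 2 + s * p).re = -b.re * p ^ 2 + s.re * p := by
    simp [← Complex.ofReal_pow]
  calc ‖(p : ℂ) ^ q * Complex.exp (-b * p ^ 2 + s * p)‖
    _ = |p| ^ q * Real.exp (-b.re * p ^ 2 + s.re * p) := by
      rw [norm_mul, norm_pow, Complex.norm_real, Real.norm_eq_abs, Complex.norm_exp, hre]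
    _ ≤ (q ! * Real.exp |p|) * Real.exp (-b.re * p ^ 2 + |s.re| * |p|) := by
      gcongr ?_ * Real.exp (_ + ?_)
      · exact abs_pow_le_factorial_mul_exp_abs p q
      · rw [← abs_mul]
        exact le_abs_self _
    _ = q ! * Real.exp (-b.re * p ^ 2 + (|s.re| + 1) * |p|) := by
      rw [mul_assoc, ← Real.exp_add]
      ring_nf

theorem integral_pow_succ_mul_cexp_quadratic (hb : 0 < b.re) (s : ℂ) (q : ℕ) :
    2 * b * ∫ p : ℝ, (p : ℂ) ^ (q + 1) * Complex.exp (-b * p ^ 2 + s * p) =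
      s * (∫ p : ℝ, (p : ℂ) ^ q * Complex.exp (-b * p ^ 2 + s * p)) +
        q * ∫ p : ℝ, (p : ℂ) ^ (q - 1) * Complex.exp (-b * p ^ 2 + s * p) := by
  have hderiv (p : ℝ) : HasDerivAt
      (fun p : ℝ ↦ (p : ℂ) ^ q * Complex.exp (-b * p ^ 2 + s * p))
      (s * ((p : ℂ) ^ q * Complex.exp (-b * p ^ 2 + s * p)) +
          q * ((p : ℂ) ^ (q - 1) * Complex.exp (-b * p ^ 2 + s * p)) -
        2 * b * ((p : ℂ) ^ (q + 1) * Complex.exp (-b * p ^ 2 + s * p))) p := by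
    have hquad : HasDerivAt (fun w : ℂ ↦ -b * w ^ 2 + s * w) (-b * (2 * p) + s) (p : ℂ) := by
      simpa using ((hasDerivAt_pow 2 (p : ℂ)).const_mul (-b)).fun_add
        ((hasDerivAt_id (p : ℂ)).const_mul s)
    exact (((hasDerivAt_pow q (p : ℂ)).mul hquad.cexp).congr_deriv (by ring)).comp_ofReal
  have hint := integrable_pow_mul_cexp_quadratic hb s
  have h₀ := (hint q).const_mul s
  have h₁ := (hint (q - 1)).const_mul (q : ℂ)
  have h₂ := (hint (q + 1)).const_mul (2 * b)
  have hzero := integral_eq_zero_of_hasDerivAt_of_integrable hderiv ((h₀.fun_add h₁).sub h₂)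
    (hint q)
  rw [integral_sub (h₀.fun_add h₁) h₂, integral_add h₀ h₁] at hzero
  simp only [integral_const_mul] at hzero
  linear_combination -hzero

theorem integral_cexp_neg_quadratic (hb : 0 < b.re) (s : ℂ) :
    ∫ p : ℝ, Complex.exp (-b * p ^ 2 + s * p) =
      (π / b) ^ (1 / 2 : ℂ) * Complex.exp (s ^ 2 / (4 * b)) := by
  have := integral_cexp_quadratic (b := -b) (by simpa using hb) s 0
  simpa only [neg_neg, add_zero, zero_sub, mul_neg, div_neg] using this

theorem integral_pow_mul_cexp_quadratic (hb : 0 < b.re) (s : ℂ) (q : ℕ) :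
    ∫ p : ℝ, (p : ℂ) ^ q * Complex.exp (-b * p ^ 2 + s * p) =
      (π / b) ^ (1 / 2 : ℂ) * Complex.exp (s ^ 2 / (4 * b)) *
        (q ! * expQuadCoeff (s / (2 * b)) (1 / (4 * b)) q) := by
  have hb₀ : b ≠ 0 := by rintro rfl; simp at hb
  have hzero : ∫ p : ℝ, (p : ℂ) ^ 0 * Complex.exp (-b * p ^ 2 + s * p) =
      (π / b) ^ (1 / 2 : ℂ) * Complex.exp (s ^ 2 / (4 * b)) := by
    simpa only [pow_zero, one_mul] using integral_cexp_neg_quadratic hb s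
  have hrec := integral_pow_succ_mul_cexp_quadratic hb s
  induction q using Nat.twoStepInduction with
  | zero => rw [hzero, expQuadCoeff_zero, Nat.factorial_zero, Nat.cast_one, mul_one, mul_one]
  | one =>
    have h₁ := hrec 0
    rw [hzero, Nat.cast_zero, zero_mul, add_zero] at h₁
    rw [expQuadCoeff_one, Nat.factorial_one, Nat.cast_one, one_mul]
    refine mul_left_cancel₀ (mul_ne_zero two_ne_zero hb₀) (h₁.trans ?_)
    field_simp
  | more q ih₀ ih₁ =>
    have h₂ := hrec (q + 1)
    rw [Nat.add_sub_cancel, ih₀, ih₁] at h₂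
    refine mul_left_cancel₀ (mul_ne_zero two_ne_zero hb₀) (h₂.trans ?_)
    set α := s / (2 * b)
    set β := 1 / (4 * b)
    have hcoeff : 2 * b * ((q + 2) * expQuadCoeff α β (q + 2)) =
        s * expQuadCoeff α β (q + 1) + expQuadCoeff α β q := by
      rw [expQuadCoeff_add_two]
      simp only [α, β]
      field_simp
      ring
    rw [Nat.factorial_succ (q + 1), Nat.factorial_succ]
    push_cast
    linear_combination
      -((π / b) ^ (1 / 2 : ℂ) * Complex.exp (s ^ 2 / (4 * b)) * ((q + 1) * q !)) * hcoeff

end GaussianMoments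

/-- The real cube root of two, in powers of which the paper's coefficients are scaled. -/
noncomputable def cbrtTwo : ℝ := (2 : ℝ) ^ ((1 : ℝ) / 3)

section Coefficients

theorem cbrtTwo_pos : 0 < cbrtTwo := by unfold cbrtTwo; positivity

theorem cbrtTwo_pow_three : cbrtTwo ^ 3 = 2 := by
  rw [cbrtTwo, ← Real.rpow_natCast, ← Real.rpow_mul zero_le_two]
  norm_num

theorem ofReal_cbrtTwo_ne_zero : (cbrtTwo : ℂ) ≠ 0 := by exact_mod_cast cbrtTwo_pos.ne'

theorem ofReal_cbrtTwo_pow_three : (cbrtTwo : ℂ) ^ 3 = 2 := by exact_mod_cast cbrtTwo_pow_three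

theorem two_rpow_div_three (s : ℝ) : (2 : ℝ) ^ (s / 3) = cbrtTwo ^ s := by
  rw [cbrtTwo, ← Real.rpow_mul zero_le_two]
  ring_nf

theorem two_cpow_four_mul_div_three (d : ℕ) :
    (2 : ℂ) ^ ((4 * (d : ℂ)) / 3) = (cbrtTwo : ℂ) ^ (4 * d) := by
  have hreal : (2 : ℝ) ^ (((4 * d : ℕ) : ℝ) / 3) = cbrtTwo ^ (4 * d) := by
    rw [two_rpow_div_three, Real.rpow_natCast]
  rw [← Complex.ofReal_pow, ← hreal, Complex.ofReal_cpow zero_le_two]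
  push_cast
  rfl

theorem c_eq_factorial_mul_expQuadCoeff (x : ℂ) (q : ℕ) :
    c x q = (-cbrtTwo ^ 2) ^ q * (q ! * expQuadCoeff (-x / 6) (1 / 24) q) := by
  have hcube := ofReal_cbrtTwo_pow_three
  have hne := ofReal_cbrtTwo_ne_zero
  have hα : -(cbrtTwo : ℂ) ^ 2 * (-x / 6) = x / (3 * cbrtTwo) := by
    field_simp
    linear_combination x * 3 * hcube
  have hβ : (-(cbrtTwo : ℂ) ^ 2) ^ 2 * (1 / 24) = 1 / (6 * cbrtTwo ^ 2) := by
    field_simp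
    linear_combination (cbrtTwo ^ 3 + 2) * 6 * hcube
  rw [mul_left_comm, ← expQuadCoeff_smul, hα, hβ, c, expQuadCoeff, Finset.mul_sum]
  refine Finset.sum_congr rfl fun j hj ↦ ?_
  obtain ⟨i, rfl⟩ : ∃ i, q = i + 2 * j := ⟨q - 2 * j, by rw [Finset.mem_range] at hj; omega⟩
  have hthree : (3 : ℝ) ^ ((j : ℤ) - ((i + 2 * j : ℕ) : ℤ)) = ((3 : ℝ) ^ (i + j))⁻¹ := by
    rw [← zpow_natCast, ← zpow_neg]
    congr 1
    push_cast
    ring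
  have htwo : (2 : ℝ) ^ (-((i + 2 * j : ℕ) : ℝ) / 3 - (j : ℝ)) =
      (cbrtTwo ^ (i + 2 * j) * 2 ^ j)⁻¹ := by
    rw [Real.rpow_sub zero_lt_two, two_rpow_div_three, Real.rpow_neg cbrtTwo_pos.le,
      Real.rpow_natCast, Real.rpow_natCast, mul_inv, div_eq_mul_inv]
  rw [hthree, htwo, Nat.add_sub_cancel]
  push_cast
  rw [show (6 : ℂ) = 2 * 3 by norm_num]
  simp only [div_pow, mul_pow, pow_add, pow_mul, one_pow]
  field_simp

theorem a_eq_div_factorial (x : ℂ) (d k j : ℕ) :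
    a x (d + k + 2 * j) (d + k + j) k =
      (-1) ^ (d + k + j) * x ^ k * cbrtTwo ^ (4 * d) / (k ! * d ! * j !) := by
  have hd : 2 * (d + k + j) - (d + k + 2 * j) - k = d := by omega
  have hj : d + k + 2 * j - (d + k + j) = j := by omega
  rw [a, hd, hj, two_cpow_four_mul_div_three]

theorem add_pow_div_factorial (v w : ℂ) (d : ℕ) :
    (v + w) ^ d / (d ! : ℂ) = ∑ k ∈ Finset.range (d + 1),
      v ^ k * w ^ (d - k) / ((k ! : ℂ) * ((d - k)! : ℂ)) := by
  rw [add_pow, Finset.sum_div]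
  refine Finset.sum_congr rfl fun k hk ↦ ?_
  have hne (i : ℕ) : (i ! : ℂ) ≠ 0 := mod_cast i.factorial_ne_zero
  rw [Nat.cast_choose ℂ (Nat.lt_succ_iff.1 (Finset.mem_range.1 hk))]
  field_simp [hne]

theorem pow_mul_pow_div_factorial_eq_a_mul_pow (x v : ℂ) (d k j : ℕ) :
    (-(x * v ^ 2)) ^ k * (cbrtTwo ^ 4 * v ^ 3) ^ d / (k ! * d !) * ((-v ^ 4) ^ j / j !) =
      (-1) ^ (d + k + 2 * j + k) * a x (d + k + 2 * j) (d + k + j) k *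
        v ^ (3 * d + 2 * k + 4 * j) := by
  have hsign : (-1 : ℂ) ^ (d + k + 2 * j + k) * (-1) ^ (d + k + j) = (-1) ^ k * (-1) ^ j := by
    rw [← pow_add, ← pow_add, show d + k + 2 * j + k + (d + k + j) = k + j + 2 * (d + k + j) by
      omega, pow_add, pow_mul, neg_one_sq, one_pow, mul_one]
  rw [a_eq_div_factorial, neg_pow (x * v ^ 2), neg_pow (v ^ 4)]
  linear_combination -(x ^ k * cbrtTwo ^ (4 * d) * v ^ (3 * d + 2 * k + 4 * j) /
    (k ! * d ! * j !)) * hsign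

/-- The double sum in `A` comes from expanding the binomial powers inside `expQuadCoeff`. -/
theorem cbrtTwo_pow_mul_expQuadCoeff (x u : ℂ) (n : ℕ) :
    (cbrtTwo : ℂ) ^ (4 * n) * expQuadCoeff (-(4 * u ^ 3 + x * u ^ 2)) (-u ^ 4) n =
      ∑ m ∈ Finset.Icc ((n + 1) / 2) n, ∑ k ∈ Finset.range (2 * m - n + 1),
        (-1) ^ (n + k) * a x n m k * (-cbrtTwo ^ 2 * u) ^ (2 * m + n - k) := by
  have hcube := ofReal_cbrtTwo_pow_three
  have hα : (cbrtTwo : ℂ) ^ 4 * (-(4 * u ^ 3 + x * u ^ 2)) =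
      -(x * (-cbrtTwo ^ 2 * u) ^ 2) + cbrtTwo ^ 4 * (-cbrtTwo ^ 2 * u) ^ 3 := by
    linear_combination (-cbrtTwo ^ 4 * u ^ 3 * (-cbrtTwo ^ 3 - 2)) * hcube
  have hβ : ((cbrtTwo : ℂ) ^ 4) ^ 2 * (-u ^ 4) = -(-cbrtTwo ^ 2 * u) ^ 4 := by ring
  rw [pow_mul, ← expQuadCoeff_smul, hα, hβ]
  generalize -(cbrtTwo : ℂ) ^ 2 * u = v
  refine Finset.sum_nbij' (fun j ↦ n - j) (fun m ↦ n - m) ?_ ?_ ?_ ?_ ?_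
  · intro j hj
    simp only [Finset.mem_range, Finset.mem_Icc] at hj ⊢
    omega
  · intro m hm
    simp only [Finset.mem_range, Finset.mem_Icc] at hm ⊢
    omega
  · intro j hj
    rw [Finset.mem_range] at hj
    omega
  · intro m hm
    rw [Finset.mem_Icc] at hm
    omega
  · intro j hj
    obtain ⟨i, rfl⟩ : ∃ i, n = i + 2 * j := ⟨n - 2 * j, by rw [Finset.mem_range] at hj; omega⟩
    have hm : i + 2 * j - j = i + j := by omega
    have hi : 2 * (i + j) - (i + 2 * j) = i := by omega
    rw [hm, hi, Nat.add_sub_cancel, add_pow_div_factorial, Finset.sum_mul]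
    refine Finset.sum_congr rfl fun k hk ↦ ?_
    obtain ⟨d, rfl⟩ : ∃ d, i = d + k := ⟨i - k, by rw [Finset.mem_range] at hk; omega⟩
    rw [show 2 * (d + k + j) + (d + k + 2 * j) - k = 3 * d + 2 * k + 4 * j by omega,
      Nat.add_sub_cancel, pow_mul_pow_div_factorial_eq_a_mul_pow]

end Coefficients

/-- The Gaussian weight `exp (-6 u² - 2 x u)` which remains, after rescaling, of the integrand of
`P x y` at a saddle point. -/
noncomputable def saddleWeight (x u : ℂ) : ℂ := Complex.exp (-6 * u ^ 2 - 2 * x * u)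

/-- The first order perturbation of `saddleWeight`. -/
noncomputable def saddleCubic (x u : ℂ) : ℂ := -(4 * u ^ 3 + x * u ^ 2)

section SaddleMoments

variable {ω : ℂ}

theorem cpow_one_half_pi_div_six_mul_sq (hω : 0 < ω.re) :
    ((π : ℂ) / (6 * ω ^ 2)) ^ (1 / 2 : ℂ) = √(π / 6) / ω := by
  have hsq : (π : ℂ) / (6 * ω ^ 2) = (√(π / 6) / ω) ^ 2 := by
    rw [div_pow, ← Complex.ofReal_pow, Real.sq_sqrt (by positivity)]
    push_cast
    ring
  have hre : 0 < ((√(π / 6) : ℂ) / ω).re := by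
    rw [div_eq_mul_inv, Complex.re_ofReal_mul, Complex.inv_re]
    have : 0 < Complex.normSq ω := Complex.normSq_pos.2 (by rintro rfl; simp at hω)
    positivity
  obtain ⟨hlower, hupper⟩ := abs_lt.1 (Complex.abs_arg_lt_pi_div_two_iff.2 (Or.inl hre))
  rw [hsq, one_div]
  exact_mod_cast Complex.pow_cpow_nat_inv two_ne_zero (by push_cast; linarith)
    (by push_cast; linarith)

theorem saddleWeight_mul_pow (x ω v : ℂ) (p : ℝ) (q : ℕ) :
    saddleWeight x (ω * p) * (v * (ω * p)) ^ q =
      (v * ω) ^ q * ((p : ℂ) ^ q * Complex.exp (-(6 * ω ^ 2) * p ^ 2 + -(2 * x * ω) * p)) := by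
  rw [saddleWeight, show -6 * (ω * p) ^ 2 - 2 * x * (ω * p) =
    -(6 * ω ^ 2) * p ^ 2 + -(2 * x * ω) * p by ring]
  ring

theorem re_six_mul_sq_pos (hω₂ : 0 < (ω ^ 2).re) : 0 < (6 * ω ^ 2).re := by
  simpa using hω₂

theorem integrable_saddleWeight_mul_pow (hω₂ : 0 < (ω ^ 2).re) (x v : ℂ) (q : ℕ) :
    Integrable fun p : ℝ ↦ saddleWeight x (ω * p) * (v * (ω * p)) ^ q := by
  simp only [saddleWeight_mul_pow]
  exact (integrable_pow_mul_cexp_quadratic (re_six_mul_sq_pos hω₂) _ q).const_mul _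

theorem integral_saddleWeight_mul_pow (hω : 0 < ω.re) (hω₂ : 0 < (ω ^ 2).re) (x : ℂ) (q : ℕ) :
    ∫ p : ℝ, saddleWeight x (ω * p) * (-cbrtTwo ^ 2 * (ω * p)) ^ q =
      √(π / 6) / ω * Complex.exp (x ^ 2 / 6) * c x q := by
  have hω₀ : ω ≠ 0 := by rintro rfl; simp at hω
  have hα : -(2 * x * ω) / (2 * (6 * ω ^ 2)) = ω⁻¹ * (-x / 6) := by
    field_simp
  have hβ : 1 / (4 * (6 * ω ^ 2)) = ω⁻¹ ^ 2 * (1 / 24) := by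
    field_simp
    norm_num
  have hexp : (-(2 * x * ω)) ^ 2 / (4 * (6 * ω ^ 2)) = x ^ 2 / 6 := by
    field_simp
    ring
  simp only [saddleWeight_mul_pow]
  rw [integral_const_mul, integral_pow_mul_cexp_quadratic (re_six_mul_sq_pos hω₂),
    cpow_one_half_pi_div_six_mul_sq hω, hα, hβ, hexp, expQuadCoeff_smul,
    c_eq_factorial_mul_expQuadCoeff, mul_pow, inv_pow]
  field_simp

theorem integral_saddleWeight_mul_expQuadCoeff (hω : 0 < ω.re) (hω₂ : 0 < (ω ^ 2).re) (x : ℂ)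
    (n : ℕ) :
    ∫ p : ℝ, saddleWeight x (ω * p) * expQuadCoeff (saddleCubic x (ω * p)) (-(ω * p) ^ 4) n =
      √(π / 6) / ω * Complex.exp (x ^ 2 / 6) * (A x n / cbrtTwo ^ (4 * n)) := by
  have hne : (cbrtTwo : ℂ) ^ (4 * n) ≠ 0 := pow_ne_zero _ ofReal_cbrtTwo_ne_zero
  have hterm (m k q : ℕ) : Integrable fun p : ℝ ↦
      saddleWeight x (ω * p) * ((-1) ^ (n + k) * a x n m k * (-cbrtTwo ^ 2 * (ω * p)) ^ q) :=
    ((integrable_saddleWeight_mul_pow hω₂ x (-cbrtTwo ^ 2) q).const_mul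
      ((-1) ^ (n + k) * a x n m k)).congr (ae_of_all _ fun p ↦ by ring)
  have hintegral (m k q : ℕ) :
      ∫ p : ℝ, saddleWeight x (ω * p) *
          ((-1) ^ (n + k) * a x n m k * (-cbrtTwo ^ 2 * (ω * p)) ^ q) =
        √(π / 6) / ω * Complex.exp (x ^ 2 / 6) * ((-1) ^ (n + k) * a x n m k * c x q) := by
    simp only [mul_left_comm (saddleWeight x _)]
    rw [integral_const_mul, integral_saddleWeight_mul_pow hω hω₂]
    ring
  rw [mul_div_assoc', eq_div_iff hne, mul_comm _ ((cbrtTwo : ℂ) ^ _), ← integral_const_mul]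
  simp only [saddleCubic, mul_left_comm _ (saddleWeight x _), cbrtTwo_pow_mul_expQuadCoeff,
    Finset.mul_sum]
  rw [integral_finsetSum _ fun m _ ↦ integrable_finsetSum _ fun k _ ↦ hterm m k _, A,
    Finset.mul_sum]
  refine Finset.sum_congr rfl fun m _ ↦ ?_
  rw [integral_finsetSum _ fun k _ ↦ hterm m k _, Finset.mul_sum]
  exact Finset.sum_congr rfl fun k _ ↦ hintegral m k _

end SaddleMoments

section ContourShift

variable {f : ℂ → ℂ} {g : ℝ → ℝ} {h : ℝ}

theorem integrable_comp_ofReal_add_mul_I (hf : Differentiable ℂ f) (hg : Integrable g)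
    (hbound : ∀ u : ℝ, ‖f (u + h * Complex.I)‖ ≤ g u) :
    Integrable fun u : ℝ ↦ f (u + h * Complex.I) :=
  hg.mono' (hf.continuous.comp (by fun_prop)).aestronglyMeasurable (ae_of_all _ hbound)

theorem intervalIntegral_sub_intervalIntegral_add_mul_I (hf : Differentiable ℂ f) (h T : ℝ) :
    (∫ u : ℝ in -T..T, f u) - ∫ u : ℝ in -T..T, f (u + h * Complex.I) =
      Complex.I * (∫ v : ℝ in 0..h, f (-T + v * Complex.I)) -
        Complex.I * ∫ v : ℝ in 0..h, f (T + v * Complex.I) := by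
  have hrect := Complex.integral_boundary_rect_eq_zero_of_differentiableOn f (-T)
    (T + h * Complex.I) hf.differentiableOn
  simp only [Complex.neg_im, Complex.ofReal_im, neg_zero, Complex.ofReal_zero, zero_mul,
    add_zero, Complex.neg_re, Complex.ofReal_re, Complex.add_re, Complex.mul_re,
    Complex.I_re, mul_zero, Complex.I_im, tsub_zero, Complex.add_im, Complex.mul_im,
    mul_one, zero_add, smul_eq_mul, Complex.ofReal_neg] at hrect
  linear_combination hrect

theorem integral_comp_ofReal_add_mul_I (hf : Differentiable ℂ f) (hg : Integrable g)
    (hg₀ : Tendsto g (cocompact ℝ) (𝓝 0))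
    (hbound : ∀ u v : ℝ, |v| ≤ |h| → ‖f (u + v * Complex.I)‖ ≤ g u) :
    ∫ u : ℝ, f (u + h * Complex.I) = ∫ u : ℝ, f u := by
  have hint (v : ℝ) (hv : |v| ≤ |h|) : Integrable fun u : ℝ ↦ f (u + v * Complex.I) :=
    integrable_comp_ofReal_add_mul_I hf hg fun u ↦ hbound u v hv
  have hreal : Integrable fun u : ℝ ↦ f u := by simpa using hint 0 (by simp)
  have hside (T : ℝ) : ‖∫ v : ℝ in 0..h, f (T + v * Complex.I)‖ ≤ g T * |h| := by
    refine (intervalIntegral.norm_integral_le_of_norm_le_const fun v hv ↦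
      hbound T v ?_).trans_eq (by rw [sub_zero])
    simpa using Set.abs_sub_left_of_mem_uIcc (Set.uIoc_subset_uIcc hv)
  have hlim : Tendsto (fun T : ℝ ↦ (∫ u : ℝ in -T..T, f u) -
      ∫ u : ℝ in -T..T, f (u + h * Complex.I)) atTop (𝓝 0) := by
    refine squeeze_zero_norm (a := fun T ↦ g (-T) * |h| + g T * |h|) (fun T ↦ ?_) ?_
    · rw [intervalIntegral_sub_intervalIntegral_add_mul_I hf]
      refine norm_sub_le_of_le ?_ ?_ <;> rw [norm_mul, Complex.norm_I, one_mul]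
      · simpa using hside (-T)
      · exact hside T
    · rw [cocompact_eq_atBot_atTop, tendsto_sup] at hg₀
      simpa using ((hg₀.1.comp tendsto_neg_atTop_atBot).mul_const |h|).add
        (hg₀.2.mul_const |h|)
  have htruncated := (intervalIntegral_tendsto_integral hreal tendsto_neg_atTop_atBot
    tendsto_id).sub (intervalIntegral_tendsto_integral (hint h le_rfl) tendsto_neg_atTop_atBot
      tendsto_id)
  exact (sub_eq_zero.1 (tendsto_nhds_unique htruncated hlim)).symm

end ContourShift

/-- The integrand of `P x y` with `cos (y t)` replaced by `exp (I y t)`, as an entire function. -/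
noncomputable def pearceyKernel (x y w : ℂ) : ℂ :=
  Complex.exp (-w ^ 4 - x * w ^ 2 + Complex.I * y * w)

section PearceyKernel

variable (x y : ℂ) (h : ℝ)

theorem differentiable_pearceyKernel : Differentiable ℂ (pearceyKernel x y) := by
  unfold pearceyKernel
  fun_prop

theorem pearceyKernel_neg (w : ℂ) : pearceyKernel x y (-w) = pearceyKernel x (-y) w := by
  unfold pearceyKernel
  ring_nf

theorem re_neg_pow_four_le (u : ℝ) {v : ℝ} (hv : |v| ≤ |h|) :
    (-(u + v * Complex.I) ^ 4).re ≤ -u ^ 4 + 6 * h ^ 2 * u ^ 2 := by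
  have hre : (-(u + v * Complex.I) ^ 4).re = -u ^ 4 + 6 * v ^ 2 * u ^ 2 - v ^ 4 := by
    simp [pow_succ]
    ring
  have hsq : v ^ 2 * u ^ 2 ≤ h ^ 2 * u ^ 2 := by gcongr ?_ * _; exact sq_le_sq.2 hv
  linarith [show 0 ≤ v ^ 4 by positivity]

theorem exists_norm_pearceyKernel_le : ∃ K : ℝ, ∀ u v : ℝ, |v| ≤ |h| →
    ‖pearceyKernel x y (u + v * Complex.I)‖ ≤ K * Real.exp (-u ^ 2) := by
  set b := 6 * h ^ 2 + ‖x‖ + ‖y‖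
  set d := ‖x‖ * h ^ 2 + ‖y‖ * (1 + |h|)
  refine ⟨Real.exp (d + (b + 1) ^ 2), fun u v hv ↦ ?_⟩
  rw [pearceyKernel, Complex.norm_exp, ← Real.exp_add, Real.exp_le_exp, Complex.add_re,
    sub_eq_add_neg, Complex.add_re]
  have hquad : (-(x * (u + v * Complex.I) ^ 2)).re ≤ ‖x‖ * (u ^ 2 + h ^ 2) := by
    refine (Complex.re_le_norm _).trans ?_
    rw [norm_neg, norm_mul, norm_pow, Complex.sq_norm, Complex.normSq_add_mul_I]
    gcongr ‖x‖ * (u ^ 2 + ?_)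
    exact sq_le_sq.2 hv
  have hlin : (Complex.I * y * (u + v * Complex.I)).re ≤ ‖y‖ * (u ^ 2 + 1 + |h|) := by
    refine (Complex.re_le_norm _).trans ?_
    rw [norm_mul, norm_mul, Complex.norm_I, one_mul]
    gcongr
    refine norm_add_le_of_le ?_ (by simpa using hv)
    rw [Complex.norm_real, Real.norm_eq_abs, ← sq_abs]
    linarith [sq_nonneg (|u| - 1), sq_nonneg |u|]
  calc (-(u + v * Complex.I) ^ 4).re + (-(x * (u + v * Complex.I) ^ 2)).re +
        (Complex.I * y * (u + v * Complex.I)).re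
    _ ≤ -u ^ 4 + 6 * h ^ 2 * u ^ 2 + ‖x‖ * (u ^ 2 + h ^ 2) + ‖y‖ * (u ^ 2 + 1 + |h|) := by
      gcongr
      exact re_neg_pow_four_le h u hv
    _ = d + (b + 1) ^ 2 + -u ^ 2 - ((u ^ 2 - (b + 1) / 2) ^ 2 + 3 / 4 * (b + 1) ^ 2) := by
      simp only [b, d]
      ring
    _ ≤ d + (b + 1) ^ 2 + -u ^ 2 := sub_le_self _ (by positivity)

theorem integrable_exp_neg_sq : Integrable fun u : ℝ ↦ Real.exp (-u ^ 2) := by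
  simpa using integrable_exp_neg_mul_sq one_pos

theorem integrable_pearceyKernel :
    Integrable fun u : ℝ ↦ pearceyKernel x y (u + h * Complex.I) := by
  obtain ⟨K, hK⟩ := exists_norm_pearceyKernel_le x y h
  exact integrable_comp_ofReal_add_mul_I (differentiable_pearceyKernel x y)
    (integrable_exp_neg_sq.const_mul K) fun u ↦ hK u h le_rfl

theorem integral_pearceyKernel_add_mul_I :
    ∫ u : ℝ, pearceyKernel x y (u + h * Complex.I) = ∫ u : ℝ, pearceyKernel x y u := by
  obtain ⟨K, hK⟩ := exists_norm_pearceyKernel_le x y h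
  refine integral_comp_ofReal_add_mul_I (differentiable_pearceyKernel x y)
    (integrable_exp_neg_sq.const_mul K) ?_ hK
  have hsq : Tendsto (fun u : ℝ ↦ u ^ 2) (cocompact ℝ) atTop := by
    simpa only [Function.comp_def, Real.norm_eq_abs, sq_abs] using
      (tendsto_pow_atTop two_ne_zero).comp (tendsto_norm_cocompact_atTop (E := ℝ))
  simpa using (Real.tendsto_exp_neg_atTop_nhds_zero.comp hsq).const_mul K

theorem integral_pearceyKernel_eq_integral_Ioi_add :
    ∫ u : ℝ, pearceyKernel x y (u + h * Complex.I) =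
      (∫ u : ℝ in Set.Ioi 0, pearceyKernel x y (u + h * Complex.I)) +
        ∫ u : ℝ in Set.Ioi 0, pearceyKernel x (-y) (u + (-h : ℝ) * Complex.I) := by
  have hint := integrable_pearceyKernel x y h
  have hneg := integral_comp_neg_Ioi 0 fun u : ℝ ↦ pearceyKernel x y (u + h * Complex.I)
  have hIic := intervalIntegral.integral_Iic_add_Ioi (b := 0) hint.integrableOn hint.integrableOn
  rw [← hIic, add_comm, ← neg_zero, ← hneg, neg_zero]
  congr 2 with u
  rw [← pearceyKernel_neg]
  push_cast
  ring_nf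

theorem P_eq_integral_pearceyKernel_div_two :
    P x y = (∫ u : ℝ, pearceyKernel x y (u + h * Complex.I)) / 2 := by
  have hint (y : ℂ) : Integrable fun u : ℝ ↦ pearceyKernel x y u := by
    simpa using integrable_pearceyKernel x y 0
  have hsplit := integral_pearceyKernel_eq_integral_Ioi_add x y 0
  simp only [neg_zero, Complex.ofReal_zero, zero_mul, add_zero] at hsplit
  rw [integral_pearceyKernel_add_mul_I, hsplit,
    ← integral_add (hint y).integrableOn (hint (-y)).integrableOn, ← integral_div, P]
  congr 1 with t
  rw [pearceyKernel, pearceyKernel, Complex.exp_add, Complex.exp_add, Complex.cos]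
  ring_nf

theorem P_neg : P x (-y) = P x y := by
  simp only [P, neg_mul, Complex.cos_neg]

end PearceyKernel

/-- The leading contribution to `∫ w, pearceyKernel x (-4 * I * t ^ 3) w` of its saddle point,
located at `w = t` up to lower order terms. -/
noncomputable def saddleTerm (x t : ℂ) : ℂ :=
  √(π / 6) / t * Complex.exp (3 * t ^ 4 - x * t ^ 2 + x ^ 2 / 6)

/-- The `N`-th partial sum of the asymptotic series in powers of `t⁻²` which multiplies
`saddleTerm x t`. -/
noncomputable def saddleSeries (x : ℂ) (N : ℕ) (t : ℂ) : ℂ :=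
  ∑ n ∈ Finset.range (N + 1), A x n / cbrtTwo ^ (4 * n) * (t ^ 2)⁻¹ ^ n

/-- The rescaled integrand at a saddle point, with `ε` measuring the deviation from the Gaussian
`saddleWeight x = perturbedSaddleWeight x 0`. -/
noncomputable def perturbedSaddleWeight (x ε u : ℂ) : ℂ :=
  saddleWeight x u * Complex.exp (saddleCubic x u * ε + -u ^ 4 * ε ^ 2)

section Saddle

variable (x : ℂ) {ω : ℂ} {κ R s : ℝ} {D : Set ℝ}

theorem pearceyKernel_add_div {t : ℂ} (ht : t ≠ 0) (u : ℂ) :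
    pearceyKernel x (-4 * Complex.I * t ^ 3) (t + u / t) = Complex.exp (3 * t ^ 4 - x * t ^ 2) *
      perturbedSaddleWeight x (t ^ 2)⁻¹ u := by
  rw [pearceyKernel, perturbedSaddleWeight, saddleWeight, saddleCubic, ← Complex.exp_add,
    ← Complex.exp_add]
  congr 1
  field_simp
  linear_combination (-4 * t ^ 6 * (u + t ^ 2)) * Complex.I_sq

theorem norm_perturbedSaddleWeight_le (hω : ‖ω‖ = 1) (hκ : κ ≤ (6 * ω ^ 2 + 4 * s * ω + s ^ 2).re)
    (hR : R ≠ 0) (hx : ‖x‖ * (R ^ 2)⁻¹ ≤ κ / 2) {p : ℝ} (hp : p = R ^ 2 * s) :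
    ‖perturbedSaddleWeight x ((R * ω) ^ 2)⁻¹ (ω * p)‖
      ≤ Real.exp (-(κ / 2) * p ^ 2 + 2 * ‖x‖ * |p|) := by
  have hω₀ : ω ≠ 0 := by rintro rfl; simp at hω
  have hRℂ : (R : ℂ) ≠ 0 := mod_cast hR
  have hexponent : -6 * (ω * p) ^ 2 - 2 * x * (ω * p) +
      (saddleCubic x (ω * p) * ((R * ω) ^ 2)⁻¹ + -(ω * p) ^ 4 * ((R * ω) ^ 2)⁻¹ ^ 2) =
      ((-p ^ 2 : ℝ) : ℂ) * (6 * ω ^ 2 + 4 * s * ω + s ^ 2) +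
        (-(2 * x * (ω * p)) + -(x * ((p ^ 2 * (R ^ 2)⁻¹ : ℝ) : ℂ))) := by
    rw [saddleCubic, hp]
    push_cast
    field_simp
    ring
  have hlin : (-(2 * x * (ω * p))).re ≤ 2 * ‖x‖ * |p| := by
    refine (Complex.re_le_norm _).trans_eq ?_
    simp [hω]
  have hquad : (-(x * ((p ^ 2 * (R ^ 2)⁻¹ : ℝ) : ℂ))).re ≤ κ / 2 * p ^ 2 := by
    refine (Complex.re_le_norm _).trans ?_
    rw [norm_neg, norm_mul, Complex.norm_real, Real.norm_of_nonneg (by positivity)]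
    nlinarith [mul_le_mul_of_nonneg_right hx (sq_nonneg p)]
  rw [perturbedSaddleWeight, saddleWeight, ← Complex.exp_add, hexponent, Complex.norm_exp,
    Real.exp_le_exp, Complex.add_re, Complex.re_ofReal_mul, Complex.add_re (-_)]
  nlinarith [mul_le_mul_of_nonneg_left hκ (sq_nonneg p)]

theorem norm_saddleWeight_le (hω : ‖ω‖ = 1) (hκ₀ : 0 ≤ κ) (hκ : κ ≤ (6 * ω ^ 2).re) (p : ℝ) :
    ‖saddleWeight x (ω * p)‖ ≤ Real.exp (-(κ / 2) * p ^ 2 + 2 * ‖x‖ * |p|) := by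
  have hexponent : -6 * (ω * p) ^ 2 - 2 * x * (ω * p) =
      ((-p ^ 2 : ℝ) : ℂ) * (6 * ω ^ 2) + -(2 * x * (ω * p)) := by
    push_cast
    ring
  have hlin : (-(2 * x * (ω * p))).re ≤ 2 * ‖x‖ * |p| := by
    refine (Complex.re_le_norm _).trans_eq ?_
    simp [hω]
  rw [saddleWeight, hexponent, Complex.norm_exp, Real.exp_le_exp, Complex.add_re,
    Complex.re_ofReal_mul]
  nlinarith [mul_le_mul_of_nonneg_left hκ (sq_nonneg p), mul_nonneg hκ₀ (sq_nonneg p)]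

theorem exists_one_add_norm_saddleCubic_le (hω : ‖ω‖ = 1) :
    ∃ Q : ℝ, ∀ p : ℝ, 1 + ‖saddleCubic x (ω * p)‖ + ‖-(ω * p) ^ 4‖ ≤ Q * Real.exp |p| := by
  refine ⟨49 + 2 * ‖x‖, fun p ↦ ?_⟩
  have hnorm : ‖ω * p‖ = |p| := by rw [norm_mul, hω, one_mul, Complex.norm_real, Real.norm_eq_abs]
  have hpow (q : ℕ) := abs_pow_le_factorial_mul_exp_abs p q
  have hone : 1 ≤ Real.exp |p| := Real.one_le_exp (abs_nonneg p)
  calc 1 + ‖saddleCubic x (ω * p)‖ + ‖-(ω * p) ^ 4‖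
    _ ≤ 1 + (4 * |p| ^ 3 + ‖x‖ * |p| ^ 2) + |p| ^ 4 := by
      rw [saddleCubic, norm_neg, norm_neg, norm_pow, hnorm]
      gcongr
      refine norm_add_le_of_le ?_ ?_ <;> simp [hnorm, -Complex.norm_mul]
    _ ≤ Real.exp |p| + (4 * (3 ! * Real.exp |p|) + ‖x‖ * (2 ! * Real.exp |p|)) +
        4 ! * Real.exp |p| := by
      gcongr <;> exact hpow _
    _ = (49 + 2 * ‖x‖) * Real.exp |p| := by
      norm_num [Nat.factorial]
      ring

theorem one_le_inv_mul_of_notMem_smul {b r p : ℝ} (hb : 0 < b) (hbD : Metric.ball 0 b ⊆ D)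
    (hr : 0 < r) (hp : p ∉ r • D) : 1 ≤ r⁻¹ * (b⁻¹ * |p|) := by
  have hball : p ∉ Metric.ball 0 (r * b) := by
    have hsmul := Set.smul_set_mono (a := r) hbD
    rw [_root_.smul_ball hr.ne', smul_zero, Real.norm_of_nonneg hr.le] at hsmul
    exact fun h ↦ hp (hsmul h)
  rw [mem_ball_zero_iff, not_lt, Real.norm_eq_abs] at hball
  rw [← mul_assoc, ← mul_inv, ← div_eq_inv_mul]
  exact (one_le_div (mul_pos hr hb)).2 hball

theorem integrable_saddle_majorant (hω : ‖ω‖ = 1) (hκ : 0 < κ) {b : ℝ} (hb : 0 ≤ b) (N : ℕ) :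
    Integrable fun p : ℝ ↦ ((1 + ‖saddleCubic x (ω * p)‖ + ‖-(ω * p) ^ 4‖) * (1 + b * |p|)) ^ N *
      Real.exp (-(κ / 2) * p ^ 2 + 2 * ‖x‖ * |p|) := by
  obtain ⟨Q, hQ⟩ := exists_one_add_norm_saddleCubic_le x hω
  have hlin (p : ℝ) : 1 + b * |p| ≤ (1 + b) * Real.exp |p| := by
    have hone : 1 ≤ Real.exp |p| := Real.one_le_exp (abs_nonneg p)
    have habs : |p| ≤ Real.exp |p| := by linarith [Real.add_one_le_exp |p|]
    calc 1 + b * |p| ≤ Real.exp |p| + b * Real.exp |p| := by gcongr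
      _ = (1 + b) * Real.exp |p| := by ring
  refine ((integrable_exp_neg_mul_sq_add_mul_abs (half_pos hκ) (2 * ‖x‖ + 2 * N)).const_mul
    ((Q * (1 + b)) ^ N)).mono' ?_ (ae_of_all _ fun p ↦ ?_)
  · unfold saddleCubic
    fun_prop
  rw [Real.norm_of_nonneg (by positivity)]
  calc ((1 + ‖saddleCubic x (ω * p)‖ + ‖-(ω * p) ^ 4‖) * (1 + b * |p|)) ^ N *
        Real.exp (-(κ / 2) * p ^ 2 + 2 * ‖x‖ * |p|)
    _ ≤ (Q * Real.exp |p| * ((1 + b) * Real.exp |p|)) ^ N *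
        Real.exp (-(κ / 2) * p ^ 2 + 2 * ‖x‖ * |p|) := by
      gcongr
      · exact (by positivity : (0 : ℝ) ≤ 1 + ‖saddleCubic x (ω * p)‖ + ‖-(ω * p) ^ 4‖).trans (hQ p)
      · exact hQ p
      · exact hlin p
    _ = (Q * (1 + b)) ^ N * (Real.exp (N * (2 * |p|)) *
        Real.exp (-(κ / 2) * p ^ 2 + 2 * ‖x‖ * |p|)) := by
      rw [Real.exp_nat_mul, two_mul |p|, Real.exp_add |p|,
        ← mul_assoc ((Q * (1 + b)) ^ N), ← mul_pow]
      ring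
    _ = (Q * (1 + b)) ^ N * Real.exp (-(κ / 2) * p ^ 2 + (2 * ‖x‖ + 2 * N) * |p|) := by
      rw [← Real.exp_add]
      ring_nf

theorem isBigO_setIntegral_perturbedSaddleWeight_sub (hω : ‖ω‖ = 1) (hD : MeasurableSet D)
    (hD₀ : D ∈ 𝓝 0) (hκ₀ : 0 < κ) (hκ : ∀ s ∈ D, κ ≤ (6 * ω ^ 2 + 4 * s * ω + s ^ 2).re) (N : ℕ) :
    (fun R : ℝ ↦ (∫ p : ℝ in R ^ 2 • D, perturbedSaddleWeight x ((R * ω) ^ 2)⁻¹ (ω * p)) -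
        ∑ n ∈ Finset.range (N + 1), ((R * ω) ^ 2)⁻¹ ^ n *
          ∫ p : ℝ, saddleWeight x (ω * p) * expQuadCoeff (saddleCubic x (ω * p)) (-(ω * p) ^ 4) n)
      =O[atTop] fun R : ℝ ↦ (R ^ 2)⁻¹ ^ (N + 1) := by
  obtain ⟨b, hb, hbD⟩ := Metric.mem_nhds_iff.1 hD₀
  have hsmall : ∀ᶠ R : ℝ in atTop, ‖x‖ * (R ^ 2)⁻¹ ≤ κ / 2 := by
    have hlim : Tendsto (fun R : ℝ ↦ ‖x‖ * (R ^ 2)⁻¹) atTop (𝓝 0) := by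
      simpa using (tendsto_pow_atTop two_ne_zero).inv_tendsto_atTop.const_mul ‖x‖
    exact hlim.eventually_le_const (half_pos hκ₀)
  refine IsBigO.of_bound (3 * ∫ p : ℝ,
    ((1 + ‖saddleCubic x (ω * p)‖ + ‖-(ω * p) ^ 4‖) * (1 + b⁻¹ * |p|)) ^ (N + 1) *
      Real.exp (-(κ / 2) * p ^ 2 + 2 * ‖x‖ * |p|)) ?_
  filter_upwards [hsmall, eventually_ge_atTop 1] with R hxR hR
  have hR₀ : R ≠ 0 := by positivity
  have hε : ‖((R * ω) ^ 2)⁻¹‖ = (R ^ 2)⁻¹ := by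
    rw [norm_inv, norm_pow, norm_mul, hω, mul_one, Complex.norm_real, Real.norm_eq_abs, sq_abs]
  refine (norm_setIntegral_exp_sub_sum_expQuadCoeff_le (ρ := fun p ↦ b⁻¹ * |p|)
    (G := fun p ↦ Real.exp (-(κ / 2) * p ^ 2 + 2 * ‖x‖ * |p|)) ?_ N (hD.const_smul₀ _) ?_ ?_ ?_
    (norm_saddleWeight_le x hω hκ₀.le (by simpa using hκ 0 (mem_of_mem_nhds hD₀))) ?_ ?_ ?_ ?_
    (integrable_saddle_majorant x hω hκ₀ (by positivity) (N + 1))).trans_eq ?_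
  · rw [hε]
    exact inv_le_one_of_one_le₀ (one_le_pow₀ hR)
  · unfold saddleWeight; fun_prop
  · unfold saddleCubic; fun_prop
  · fun_prop
  · rintro _ ⟨s, hs, rfl⟩
    exact norm_perturbedSaddleWeight_le x hω (hκ s hs) hR₀ hxR rfl
  · intro p
    positivity
  · intro p hp
    rw [hε]
    exact one_le_inv_mul_of_notMem_smul hb hbD (by positivity) hp
  · fun_prop
  · rw [hε, norm_pow, Real.norm_of_nonneg (by positivity)]
    ring

theorem mul_setIntegral_pearceyKernel (hω₀ : ω ≠ 0) (hR : 0 < R) (D : Set ℝ) :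
    R * ∫ s : ℝ in D, pearceyKernel x (-4 * Complex.I * (R * ω) ^ 3) (R * ω + R * s) =
      (R * ω)⁻¹ * Complex.exp (3 * (R * ω) ^ 4 - x * (R * ω) ^ 2) * (ω *
        ∫ p : ℝ in R ^ 2 • D, perturbedSaddleWeight x ((R * ω) ^ 2)⁻¹ (ω * p)) := by
  have hRℂ : (R : ℂ) ≠ 0 := mod_cast hR.ne'
  have hscale := Measure.setIntegral_comp_smul_of_pos volume
    (fun p : ℝ ↦ perturbedSaddleWeight x ((R * ω) ^ 2)⁻¹ (ω * p)) D (pow_pos hR 2)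
  rw [Module.finrank_self, pow_one, Complex.real_smul] at hscale
  have hpoint (s : ℝ) := pearceyKernel_add_div x (mul_ne_zero hRℂ hω₀) (ω * (R ^ 2 • s : ℝ))
  have hshift (s : ℝ) : ω * ((R ^ 2 • s : ℝ) : ℂ) / (R * ω) = R * s := by
    rw [smul_eq_mul]
    push_cast
    field_simp
  simp only [hshift] at hpoint
  simp only [hpoint]
  rw [integral_const_mul, hscale]
  push_cast
  field_simp

theorem isBigO_setIntegral_pearceyKernel_sub (hω : ‖ω‖ = 1) (hre : 0 < ω.re)
    (hD : MeasurableSet D) (hD₀ : D ∈ 𝓝 0) (hκ₀ : 0 < κ)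
    (hκ : ∀ s ∈ D, κ ≤ (6 * ω ^ 2 + 4 * s * ω + s ^ 2).re) (N : ℕ) :
    (fun R : ℝ ↦ R * (∫ s : ℝ in D,
          pearceyKernel x (-4 * Complex.I * (R * ω) ^ 3) (R * ω + R * s)) -
        saddleTerm x (R * ω) * saddleSeries x N (R * ω))
      =O[atTop] fun R : ℝ ↦ ‖saddleTerm x (R * ω)‖ * (R ^ 2)⁻¹ ^ (N + 1) := by
  have hω₀ : ω ≠ 0 := by rintro rfl; simp at hω
  have hω₂ : 0 < (ω ^ 2).re := by
    have := hκ₀.trans_le (hκ 0 (mem_of_mem_nhds hD₀))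
    simpa using this
  set factor : ℝ → ℂ := fun R ↦ (R * ω)⁻¹ * Complex.exp (3 * (R * ω) ^ 4 - x * (R * ω) ^ 2)
  have hterm (R : ℝ) : saddleTerm x (R * ω) = factor R * (√(π / 6) * Complex.exp (x ^ 2 / 6)) := by
    rw [saddleTerm, Complex.exp_add]
    ring
  have hseries (R : ℝ) : saddleTerm x (R * ω) * saddleSeries x N (R * ω) =
      factor R * (ω * ∑ n ∈ Finset.range (N + 1), ((R * ω) ^ 2)⁻¹ ^ n * ∫ p : ℝ,
        saddleWeight x (ω * p) * expQuadCoeff (saddleCubic x (ω * p)) (-(ω * p) ^ 4) n) := by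
    simp only [integral_saddleWeight_mul_expQuadCoeff hre hω₂, hterm, saddleSeries,
      Finset.mul_sum]
    refine Finset.sum_congr rfl fun n _ ↦ ?_
    field_simp
  have hconst : (√(π / 6) * Complex.exp (x ^ 2 / 6) : ℂ) ≠ 0 :=
    mul_ne_zero (mod_cast (by positivity : √(π / 6) ≠ 0)) (Complex.exp_ne_zero _)
  have hfactor : factor =O[atTop] fun R ↦ saddleTerm x (R * ω) := by
    simp only [hterm]
    exact (isBigO_refl factor _).mul (isBigO_const_const _ hconst _) |>.congr_left fun R ↦ mul_one _
  refine (hfactor.norm_right.mul ((isBigO_setIntegral_perturbedSaddleWeight_sub x hω hD hD₀ hκ₀ hκ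
    N).const_mul_left ω)).congr' ?_ EventuallyEq.rfl
  filter_upwards [eventually_gt_atTop 0] with R hR
  rw [hseries, mul_setIntegral_pearceyKernel x hω₀ hR]
  ring

end Saddle

/-- The direction of the `k`-th saddle point of `P x y`, relative to the cube root of `y`. -/
noncomputable def saddleRotation (k : ℕ) : ℂ := Complex.exp (-(-1) ^ k * π * Complex.I / 6)

/-- The `k`-th saddle point of `P x (z ^ 3)`, up to lower order terms and up to the symmetry
`P x (-y) = P x y`. -/
noncomputable def saddlePoint (z : ℂ) (k : ℕ) : ℂ := z * saddleRotation k / cbrtTwo ^ 2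

section Matching

variable {z : ℂ} (x : ℂ) (k : ℕ)

theorem cpow_intCast_div_three (hlower : -π < 3 * z.arg) (hupper : 3 * z.arg ≤ π) (m : ℤ) :
    (z ^ 3) ^ ((m : ℂ) / 3) = z ^ m := by
  rw [← Complex.cpow_nat_mul' (by exact_mod_cast hlower) (by exact_mod_cast hupper),
    ← Complex.cpow_intCast]
  congr 1
  push_cast
  ring

theorem four_cpow_intCast_div_three (m : ℤ) : (4 : ℂ) ^ ((m : ℂ) / 3) = (cbrtTwo ^ 2) ^ m := by
  have hcube : ((cbrtTwo : ℂ) ^ 2) ^ 3 = 4 := by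
    rw [pow_right_comm, ofReal_cbrtTwo_pow_three]
    norm_num
  have harg : ((cbrtTwo : ℂ) ^ 2).arg = 0 := by
    rw [← Complex.ofReal_pow, Complex.arg_ofReal_of_nonneg (sq_nonneg _)]
  rw [← hcube, cpow_intCast_div_three] <;> rw [harg, mul_zero]
  exacts [neg_neg_of_pos pi_pos, pi_pos.le]

theorem saddleRotation_pow (q : ℕ) :
    saddleRotation k ^ q = Complex.exp (-(-1) ^ k * q * π * Complex.I / 6) := by
  rw [saddleRotation, ← Complex.exp_nat_mul]
  ring_nf

theorem norm_saddleRotation : ‖saddleRotation k‖ = 1 := by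
  rw [saddleRotation, show -(-1) ^ k * π * Complex.I / 6 =
    ((-(-1) ^ k * π / 6 : ℝ) : ℂ) * Complex.I by push_cast; ring, Complex.norm_exp_ofReal_mul_I]

theorem saddleRotation_ne_zero : saddleRotation k ≠ 0 := Complex.exp_ne_zero _

theorem saddlePoint_pow_three : -4 * Complex.I * saddlePoint z k ^ 3 = -(-1) ^ k * z ^ 3 := by
  have hrot : saddleRotation k ^ 3 = -(-1) ^ k * Complex.I := by
    rw [saddleRotation_pow]
    rcases neg_one_pow_eq_or ℂ k with h | h <;> rw [h]
    · rw [show -(1 : ℂ) * (3 : ℕ) * π * Complex.I / 6 = -π / 2 * Complex.I by push_cast; ring,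
        Complex.exp_neg_pi_div_two_mul_I, neg_one_mul]
    · rw [show -(-1 : ℂ) * (3 : ℕ) * π * Complex.I / 6 = π / 2 * Complex.I by push_cast; ring,
        Complex.exp_pi_div_two_mul_I, neg_neg, one_mul]
  rw [saddlePoint, div_pow, mul_pow, hrot, pow_right_comm, ofReal_cbrtTwo_pow_three]
  linear_combination (-1) ^ k * z ^ 3 * Complex.I_sq

theorem sqrt_pi_div_three_mul_two_rpow :
    √(π / 3) * 2 ^ (-(5 : ℝ) / 6) = √(π / 6) * cbrtTwo ^ 2 / 2 := by
  have hsqrt : √(π / 3) = √(π / 6) * 2 ^ ((1 : ℝ) / 2) := by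
    rw [← Real.sqrt_eq_rpow, ← Real.sqrt_mul (by positivity)]
    ring_nf
  have htwo : (2 : ℝ) ^ ((1 : ℝ) / 2) * 2 ^ (-(5 : ℝ) / 6) = 2 ^ ((1 : ℝ) / 3 * (2 : ℕ)) / 2 := by
    rw [← Real.rpow_add two_pos, ← Real.rpow_sub_one two_ne_zero]
    norm_num
  rw [hsqrt, mul_assoc, htwo, cbrtTwo, Real.rpow_mul_natCast zero_le_two]
  ring

theorem E_pow_three (hlower : -π < 3 * z.arg) (hupper : 3 * z.arg ≤ π) :
    E x (z ^ 3) k = saddleTerm x (saddlePoint z k) * saddleRotation k / 2 := by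
  have hpow := cpow_intCast_div_three hlower hupper
  have hz : (z ^ 3) ^ (-(1 : ℂ) / 3) = z⁻¹ := by simpa using hpow (-1)
  have hz₄ : (z ^ 3) ^ ((4 : ℂ) / 3) = z ^ 4 := by simpa using hpow 4
  have hz₂ : (z ^ 3) ^ ((2 : ℂ) / 3) = z ^ 2 := by simpa using hpow 2
  have hfour₄ : (4 : ℂ) ^ (-(4 : ℂ) / 3) = (((cbrtTwo : ℂ) ^ 2) ^ 4)⁻¹ := by
    simpa [-inv_pow, zpow_neg] using four_cpow_intCast_div_three (-4)
  have hfour₂ : (4 : ℂ) ^ (-(2 : ℂ) / 3) = (((cbrtTwo : ℂ) ^ 2) ^ 2)⁻¹ := by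
    simpa [-inv_pow, zpow_neg] using four_cpow_intCast_div_three (-2)
  have hrot₄ : Complex.exp (-(-1 : ℂ) ^ k * 2 * π * Complex.I / 3) = saddleRotation k ^ 4 := by
    rw [saddleRotation_pow]
    push_cast
    ring_nf
  have hrot₂ : Complex.exp (-(-1 : ℂ) ^ k * π * Complex.I / 3) = saddleRotation k ^ 2 := by
    rw [saddleRotation_pow]
    push_cast
    ring_nf
  have hexponent : 3 * (((cbrtTwo : ℂ) ^ 2) ^ 4)⁻¹ * saddleRotation k ^ 4 * z ^ 4 -
      (((cbrtTwo : ℂ) ^ 2) ^ 2)⁻¹ * x * z ^ 2 * saddleRotation k ^ 2 + x ^ 2 / 6 =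
      3 * saddlePoint z k ^ 4 - x * saddlePoint z k ^ 2 + x ^ 2 / 6 := by
    rw [saddlePoint]
    ring
  rw [E, hz, hz₄, hz₂, hfour₄, hfour₂, hrot₄, hrot₂, hexponent, ← Complex.ofReal_mul,
    sqrt_pi_div_three_mul_two_rpow, saddleTerm, saddlePoint]
  have hne := saddleRotation_ne_zero k
  push_cast
  field_simp

theorem S_pow_three (hlower : -π < 3 * z.arg) (hupper : 3 * z.arg ≤ π) (N : ℕ) :
    S x (z ^ 3) k N = (saddleRotation k)⁻¹ * saddleSeries x N (saddlePoint z k) := by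
  rw [S, saddleSeries, Finset.mul_sum]
  refine Finset.sum_congr rfl fun n _ ↦ ?_
  have hz : (z ^ 3) ^ (-(2 * (n : ℂ)) / 3) = (z ^ (2 * n))⁻¹ := by
    have hpow := cpow_intCast_div_three hlower hupper (-(2 * n : ℕ))
    rw [zpow_neg, zpow_natCast] at hpow
    simpa using hpow
  have hrot : Complex.exp ((-1 : ℂ) ^ k * (2 * n + 1) * π * Complex.I / 6) =
      (saddleRotation k ^ (2 * n + 1))⁻¹ := by
    rw [saddleRotation_pow, ← Complex.exp_neg]
    push_cast
    ring_nf
  have hne := ofReal_cbrtTwo_ne_zero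
  rw [hz, hrot, saddlePoint]
  simp only [pow_succ _ (2 * n), div_pow, mul_pow, inv_div, mul_inv, ← pow_mul]
  field_simp

theorem E_mul_S_pow_three (hlower : -π < 3 * z.arg) (hupper : 3 * z.arg ≤ π) (N : ℕ) :
    E x (z ^ 3) k * S x (z ^ 3) k N =
      saddleTerm x (saddlePoint z k) * saddleSeries x N (saddlePoint z k) / 2 := by
  rw [E_pow_three x k hlower hupper, S_pow_three x k hlower hupper]
  field_simp [saddleRotation_ne_zero k]

theorem norm_E_pow_three (hlower : -π < 3 * z.arg) (hupper : 3 * z.arg ≤ π) :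
    ‖E x (z ^ 3) k‖ = ‖saddleTerm x (saddlePoint z k)‖ / 2 := by
  rw [E_pow_three x k hlower hupper, norm_div, norm_mul, norm_saddleRotation, mul_one,
    Complex.norm_two]

end Matching

theorem mul_setIntegral_comp_mul_add (f : ℝ → ℂ) (D : Set ℝ) {R : ℝ} (hR : 0 < R) (b : ℝ) :
    R * ∫ s : ℝ in (b + ·) ⁻¹' D, f (R * (b + s)) = ∫ u : ℝ in R • D, f u := by
  have hscale := Measure.setIntegral_comp_smul_of_pos volume f D hR
  rw [Module.finrank_self, pow_one, Complex.real_smul] at hscale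
  rw [(measurePreserving_add_left volume b).setIntegral_preimage_emb
    (measurableEmbedding_addLeft b) (fun u ↦ f (R * u)) D]
  simp only [smul_eq_mul] at hscale
  rw [hscale, Complex.ofReal_inv, mul_inv_cancel_left₀ (mod_cast hR.ne')]

section SteepestDescent

variable (x : ℂ) {ω ω₁ ω₂ : ℂ}

theorem re_sq_add_im_sq_of_norm_eq_one (hω : ‖ω‖ = 1) : ω.re ^ 2 + ω.im ^ 2 = 1 := by
  rw [sq, sq, ← Complex.normSq_apply, Complex.normSq_eq_norm_sq, hω, one_pow]

theorem re_saddle_quadratic (hω : ‖ω‖ = 1) (s : ℝ) :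
    (6 * ω ^ 2 + 4 * s * ω + s ^ 2).re = (ω.re + s + ω.re) ^ 2 + 8 * ω.re ^ 2 - 6 := by
  have hexpand : (6 * ω ^ 2 + 4 * s * ω + s ^ 2).re =
      6 * (ω.re ^ 2 - ω.im ^ 2) + 4 * s * ω.re + s ^ 2 := by
    simp [sq]
  rw [hexpand]
  linear_combination -6 * re_sq_add_im_sq_of_norm_eq_one hω

theorem isBigO_setIntegral_pearceyKernel_add_mul_I_sub {D : Set ℝ} {κ : ℝ} (hω : ‖ω‖ = 1)
    (hre : 0 < ω.re) (hD : MeasurableSet D) (hcone : ∀ R : ℝ, 0 < R → R • D = D)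
    (hD₀ : D ∈ 𝓝 ω.re) (hκ₀ : 0 < κ) (hκ : ∀ u ∈ D, κ ≤ (u + ω.re) ^ 2 + 8 * ω.re ^ 2 - 6)
    (N : ℕ) :
    (fun R : ℝ ↦ (∫ u : ℝ in D,
          pearceyKernel x (-4 * Complex.I * (R * ω) ^ 3) (u + (R * ω.im : ℝ) * Complex.I)) -
        saddleTerm x (R * ω) * saddleSeries x N (R * ω))
      =O[atTop] fun R : ℝ ↦ ‖saddleTerm x (R * ω)‖ * (R ^ 2)⁻¹ ^ (N + 1) := by
  have hcont : Continuous (ω.re + · : ℝ → ℝ) := by fun_prop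
  refine (isBigO_setIntegral_pearceyKernel_sub x hω hre (hcont.measurable hD)
    (hcont.continuousAt.preimage_mem_nhds (by simpa using hD₀)) hκ₀ (fun s hs ↦ ?_) N).congr' ?_
    EventuallyEq.rfl
  · rw [re_saddle_quadratic hω]
    exact hκ _ hs
  filter_upwards [eventually_gt_atTop 0] with R hR
  have hshift (s : ℝ) : (R * ω + R * s : ℂ) =
      (R * (ω.re + s) : ℝ) + (R * ω.im : ℝ) * Complex.I := by
    apply Complex.ext <;> simp
    ring
  simp only [hshift]
  rw [mul_setIntegral_comp_mul_add (fun u ↦ pearceyKernel x (-4 * Complex.I * (R * ω) ^ 3)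
    (u + (R * ω.im : ℝ) * Complex.I)) D hR, hcone R hR]

theorem isBigO_P_sub_of_three_lt_re_sq (hω : ‖ω‖ = 1) (hre : 0 < ω.re) (hsq : 3 < 4 * ω.re ^ 2)
    (N : ℕ) :
    (fun R : ℝ ↦ P x (-4 * Complex.I * (R * ω) ^ 3) -
        saddleTerm x (R * ω) * saddleSeries x N (R * ω) / 2)
      =O[atTop] fun R : ℝ ↦ ‖saddleTerm x (R * ω)‖ * (R ^ 2)⁻¹ ^ (N + 1) := by
  have hline := isBigO_setIntegral_pearceyKernel_add_mul_I_sub x hω hre MeasurableSet.univ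
    (fun R hR ↦ Set.smul_set_univ₀ hR.ne') univ_mem (κ := 8 * ω.re ^ 2 - 6) (by linarith)
    (fun u _ ↦ by linarith [sq_nonneg (u + ω.re)]) N
  refine (hline.const_mul_left (1 / 2)).congr_left fun R ↦ ?_
  rw [P_eq_integral_pearceyKernel_div_two x _ (R * ω.im), setIntegral_univ]
  ring

theorem isBigO_setIntegral_Ioi_pearceyKernel_sub (hω : ‖ω‖ = 1) (hre : 0 < ω.re)
    (hsq : 2 < 3 * ω.re ^ 2) (N : ℕ) :
    (fun R : ℝ ↦ (∫ u : ℝ in Set.Ioi 0,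
          pearceyKernel x (-4 * Complex.I * (R * ω) ^ 3) (u + (R * ω.im : ℝ) * Complex.I)) -
        saddleTerm x (R * ω) * saddleSeries x N (R * ω))
      =O[atTop] fun R : ℝ ↦ ‖saddleTerm x (R * ω)‖ * (R ^ 2)⁻¹ ^ (N + 1) := by
  refine isBigO_setIntegral_pearceyKernel_add_mul_I_sub x hω hre measurableSet_Ioi
    (fun R hR ↦ by rw [LinearOrderedField.smul_Ioi hR, mul_zero]) (Ioi_mem_nhds hre)
    (κ := 9 * ω.re ^ 2 - 6) (by linarith) (fun u hu ↦ ?_) N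
  nlinarith [mul_pos hu hre, sq_nonneg u]

theorem isBigO_P_sub_sub_of_re_pow_three_eq_zero (hω : ‖ω‖ = 1) (hre : 0 < ω.re)
    (hcube : (ω ^ 3).re = 0) (N : ℕ) :
    (fun R : ℝ ↦ P x (-4 * Complex.I * (R * ω) ^ 3) -
        saddleTerm x (R * ω) * saddleSeries x N (R * ω) / 2 -
        saddleTerm x (R * conj ω) * saddleSeries x N (R * conj ω) / 2)
      =O[atTop] fun R : ℝ ↦
        (‖saddleTerm x (R * ω)‖ + ‖saddleTerm x (R * conj ω)‖) * (R ^ 2)⁻¹ ^ (N + 1) := by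
  have hsq : 2 < 3 * ω.re ^ 2 := by
    have hexpand : (ω ^ 3).re = ω.re * (4 * ω.re ^ 2 - 3 * (ω.re ^ 2 + ω.im ^ 2)) := by
      simp [pow_succ]
      ring
    rw [hexpand, re_sq_add_im_sq_of_norm_eq_one hω] at hcube
    rcases mul_eq_zero.1 hcube with h | h <;> linarith
  have hconj : conj ω ^ 3 = -ω ^ 3 := by
    rw [← map_pow]
    apply Complex.ext <;> simp only [Complex.conj_re, Complex.conj_im, Complex.neg_re,
      Complex.neg_im, hcube, neg_zero]
  have hhalves := ((isBigO_setIntegral_Ioi_pearceyKernel_sub x hω hre hsq N).add_add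
    (isBigO_setIntegral_Ioi_pearceyKernel_sub x (ω := conj ω) (by simpa using hω)
      (by simpa using hre) (by simpa using hsq) N)).const_mul_left (1 / 2)
  refine hhalves.congr (fun R ↦ ?_) fun R ↦ ?_
  · rw [P_eq_integral_pearceyKernel_div_two x _ (R * ω.im),
      integral_pearceyKernel_eq_integral_Ioi_add, Complex.conj_im, mul_neg, mul_pow, mul_pow,
      hconj, mul_neg, mul_neg]
    ring
  · rw [Real.norm_of_nonneg (by positivity), Real.norm_of_nonneg (by positivity), add_mul]

theorem norm_saddleTerm_eq_mul_exp (hω₁ : ‖ω₁‖ = 1) (hω₂ : ‖ω₂‖ = 1) (R : ℝ) :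
    ‖saddleTerm x (R * ω₁)‖ = ‖saddleTerm x (R * ω₂)‖ *
      Real.exp (3 * (ω₁ ^ 4 - ω₂ ^ 4).re * (R ^ 2) ^ 2 +
        -(x * (ω₁ ^ 2 - ω₂ ^ 2)).re * R ^ 2) := by
  have hexponent : 3 * (R * ω₁) ^ 4 - x * (R * ω₁) ^ 2 + x ^ 2 / 6 =
      3 * (R * ω₂) ^ 4 - x * (R * ω₂) ^ 2 + x ^ 2 / 6 +
        ((3 * (R ^ 2) ^ 2 : ℝ) * (ω₁ ^ 4 - ω₂ ^ 4) + (-R ^ 2 : ℝ) * (x * (ω₁ ^ 2 - ω₂ ^ 2))) := by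
    push_cast
    ring
  have hnorm : ‖(√(π / 6) : ℂ) / (R * ω₁)‖ = ‖(√(π / 6) : ℂ) / (R * ω₂)‖ := by
    simp only [norm_div, norm_mul, hω₁, hω₂]
  rw [saddleTerm, saddleTerm, hexponent, Complex.exp_add, ← mul_assoc, norm_mul, norm_mul,
    norm_mul, hnorm, Complex.norm_exp ((_ : ℝ) * _ + _), Complex.add_re ((_ : ℝ) * _),
    Complex.re_ofReal_mul, Complex.re_ofReal_mul]
  ring_nf

theorem isBigO_saddleSeries (hω : ‖ω‖ = 1) (N : ℕ) :
    (fun R : ℝ ↦ saddleSeries x N (R * ω)) =O[atTop] fun _ ↦ (1 : ℝ) := by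
  simp only [saddleSeries]
  refine IsBigO.fun_sum fun n _ ↦ ?_
  refine (IsBigO.of_bound ‖A x n / cbrtTwo ^ (4 * n)‖ ?_)
  filter_upwards [eventually_ge_atTop 1] with R hR
  have hinv : (R ^ 2)⁻¹ ^ n ≤ 1 :=
    pow_le_one₀ (by positivity) (inv_le_one_of_one_le₀ (one_le_pow₀ hR))
  rw [norm_mul, norm_pow, norm_inv, norm_pow, norm_mul, hω, Complex.norm_real, mul_one, norm_one,
    Real.norm_eq_abs, sq_abs]
  gcongr

theorem isBigO_saddleTerm_mul_saddleSeries_of_re_pow_four_lt (hω₁ : ‖ω₁‖ = 1) (hω₂ : ‖ω₂‖ = 1)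
    (hlt : (ω₁ ^ 4).re < (ω₂ ^ 4).re) (N : ℕ) :
    (fun R : ℝ ↦ saddleTerm x (R * ω₁) * saddleSeries x N (R * ω₁))
      =O[atTop] fun R : ℝ ↦ ‖saddleTerm x (R * ω₂)‖ * (R ^ 2)⁻¹ ^ (N + 1) := by
  have hneg : 3 * (ω₁ ^ 4 - ω₂ ^ 4).re < 0 := by
    rw [Complex.sub_re]
    linarith
  have hexp := (rexp_neg_quadratic_isLittleO_rpow_atTop hneg (-(x * (ω₁ ^ 2 - ω₂ ^ 2)).re)
    (-(N + 1 : ℕ))).isBigO.comp_tendsto (tendsto_pow_atTop (α := ℝ) two_ne_zero)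
  have hterm : (fun R : ℝ ↦ saddleTerm x (R * ω₁))
      =O[atTop] fun R : ℝ ↦ ‖saddleTerm x (R * ω₂)‖ * (R ^ 2)⁻¹ ^ (N + 1) := by
    refine IsBigO.of_norm_left ?_
    simp only [norm_saddleTerm_eq_mul_exp x hω₁ hω₂]
    refine (isBigO_refl _ _).mul (hexp.congr_right fun R ↦ ?_)
    rw [Function.comp_apply, Real.rpow_neg (sq_nonneg R), Real.rpow_natCast, inv_pow]
  simpa using hterm.mul (isBigO_saddleSeries x hω₁ N)

theorem isBigO_P_sub_sub_of_re_pow_four_lt (hω₁ : ‖ω₁‖ = 1) (hω₂ : ‖ω₂‖ = 1)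
    (hlt : (ω₁ ^ 4).re < (ω₂ ^ 4).re) (hre : 0 < ω₂.re) (hsq : 3 < 4 * ω₂.re ^ 2) (N : ℕ) :
    (fun R : ℝ ↦ P x (-4 * Complex.I * (R * ω₂) ^ 3) -
        saddleTerm x (R * ω₂) * saddleSeries x N (R * ω₂) / 2 -
        saddleTerm x (R * ω₁) * saddleSeries x N (R * ω₁) / 2)
      =O[atTop] fun R : ℝ ↦
        (‖saddleTerm x (R * ω₁)‖ + ‖saddleTerm x (R * ω₂)‖) * (R ^ 2)⁻¹ ^ (N + 1) := by
  have hrecessive := (isBigO_saddleTerm_mul_saddleSeries_of_re_pow_four_lt x hω₁ hω₂ hlt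
    N).const_mul_left (1 / 2)
  refine (((isBigO_P_sub_of_three_lt_re_sq x hω₂ hre hsq N).sub hrecessive).congr_left
    fun R ↦ by ring).trans (IsBigO.of_norm_le fun R ↦ ?_)
  rw [Real.norm_of_nonneg (by positivity)]
  gcongr
  exact le_add_of_nonneg_left (norm_nonneg _)

end SteepestDescent

/-- The direction of the `k`-th saddle point of `P x y` when `y` has argument `θ`. -/
noncomputable def saddleDirection (θ : ℝ) (k : ℕ) : ℂ :=
  Complex.exp ((θ / 3 - (-1) ^ k * π / 6 : ℝ) * Complex.I)

/-- The cube root of `4 * R ^ 3 * exp (I * θ)` whose saddle points have modulus `R`. -/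
noncomputable def saddleBase (θ R : ℝ) : ℂ :=
  (cbrtTwo ^ 2 * R : ℝ) * Complex.exp ((θ / 3 : ℝ) * Complex.I)

section Ray

variable (x : ℂ) {θ : ℝ} (k : ℕ)

theorem norm_saddleDirection : ‖saddleDirection θ k‖ = 1 := Complex.norm_exp_ofReal_mul_I _

theorem re_saddleDirection_pow (q : ℕ) :
    (saddleDirection θ k ^ q).re = cos (q * (θ / 3 - (-1) ^ k * π / 6)) := by
  rw [saddleDirection, ← Complex.exp_nat_mul, ← mul_assoc, ← Complex.ofReal_natCast,
    ← Complex.ofReal_mul, Complex.exp_ofReal_mul_I_re]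

theorem re_saddleDirection : (saddleDirection θ k).re = cos (θ / 3 - (-1) ^ k * π / 6) := by
  simpa using re_saddleDirection_pow (θ := θ) k 1

theorem re_saddleDirection_two_pow_four_sub :
    (saddleDirection θ 2 ^ 4).re - (saddleDirection θ 1 ^ 4).re =
      2 * sin (4 * θ / 3) * sin (2 * π / 3) := by
  rw [re_saddleDirection_pow, re_saddleDirection_pow, Real.cos_sub_cos, neg_mul, neg_mul,
    ← mul_neg, ← Real.sin_neg]
  congr 3 <;> · push_cast; ring

theorem saddleDirection_zero_two : saddleDirection 0 2 = conj (saddleDirection 0 1) := by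
  simp only [saddleDirection]
  rw [← Complex.exp_conj, map_mul, Complex.conj_ofReal, Complex.conj_I]
  push_cast
  ring_nf

theorem re_saddleDirection_pos (h : |θ / 3 - (-1) ^ k * π / 6| < π / 6) :
    0 < (saddleDirection θ k).re := by
  rw [re_saddleDirection]
  refine Real.cos_pos_of_mem_Ioo (abs_lt.1 (h.trans ?_))
  linarith [pi_pos]

theorem three_lt_four_mul_re_saddleDirection_sq (h : |θ / 3 - (-1) ^ k * π / 6| < π / 6) :
    3 < 4 * (saddleDirection θ k).re ^ 2 := by
  have hcos : 1 / 2 < cos (2 * (θ / 3 - (-1) ^ k * π / 6)) := by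
    rw [← Real.cos_pi_div_three, ← Real.cos_abs (2 * _), abs_mul, Nat.abs_ofNat]
    exact Real.cos_lt_cos_of_nonneg_of_le_pi (by positivity) (by linarith [pi_pos]) (by linarith)
  rw [re_saddleDirection, Real.cos_sq]
  linarith

theorem saddlePoint_saddleBase (R : ℝ) :
    saddlePoint (saddleBase θ R) k = R * saddleDirection θ k := by
  have hexp : saddleDirection θ k =
      Complex.exp ((θ / 3 : ℝ) * Complex.I) * saddleRotation k := by
    rw [saddleDirection, saddleRotation, ← Complex.exp_add]
    push_cast
    ring_nf
  have hne := ofReal_cbrtTwo_ne_zero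
  rw [saddlePoint, saddleBase, hexp]
  push_cast
  field_simp

theorem P_saddleBase_pow_three (R : ℝ) :
    P x (saddleBase θ R ^ 3) = P x (-4 * Complex.I * (R * saddleDirection θ k) ^ 3) := by
  rw [← saddlePoint_saddleBase, saddlePoint_pow_three]
  rcases neg_one_pow_eq_or ℂ k with h | h <;> simp [h, P_neg]

theorem arg_saddleBase (hθ : θ / 3 ∈ Set.Ioc (-π) π) {R : ℝ} (hR : 0 < R) :
    (saddleBase θ R).arg = θ / 3 := by
  rw [saddleBase, Complex.exp_mul_I]
  exact Complex.arg_mul_cos_add_sin_mul_I (mul_pos (pow_pos cbrtTwo_pos 2) hR) hθ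

theorem isBigO_P_sub_sub_saddleDirection (hθ : |θ| < 3 * π / 4) (N : ℕ) :
    (fun R : ℝ ↦ P x (saddleBase θ R ^ 3) -
        saddleTerm x (R * saddleDirection θ 1) * saddleSeries x N (R * saddleDirection θ 1) / 2 -
        saddleTerm x (R * saddleDirection θ 2) * saddleSeries x N (R * saddleDirection θ 2) / 2)
      =O[atTop] fun R : ℝ ↦ (‖saddleTerm x (R * saddleDirection θ 1)‖ +
        ‖saddleTerm x (R * saddleDirection θ 2)‖) * (R ^ 2)⁻¹ ^ (N + 1) := by
  have hsin : 0 < sin (2 * π / 3) :=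
    Real.sin_pos_of_pos_of_lt_pi (by linarith [pi_pos]) (by linarith [pi_pos])
  have hgap := re_saddleDirection_two_pow_four_sub (θ := θ)
  obtain ⟨hlower, hupper⟩ := abs_lt.1 hθ
  rcases lt_trichotomy θ 0 with hneg | rfl | hpos
  · have hlt : (saddleDirection θ 2 ^ 4).re < (saddleDirection θ 1 ^ 4).re := by
      nlinarith [Real.sin_neg_of_neg_of_neg_pi_lt (x := 4 * θ / 3) (by linarith) (by linarith)]
    have habs : |θ / 3 - (-1) ^ 1 * π / 6| < π / 6 := abs_lt.2 ⟨by linarith, by linarith⟩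
    simp only [P_saddleBase_pow_three x 1]
    simpa only [add_comm] using isBigO_P_sub_sub_of_re_pow_four_lt x (norm_saddleDirection 2)
      (norm_saddleDirection 1) hlt (re_saddleDirection_pos 1 habs)
      (three_lt_four_mul_re_saddleDirection_sq 1 habs) N
  · have hcube : (saddleDirection 0 1 ^ 3).re = 0 := by
      rw [re_saddleDirection_pow, show ((3 : ℕ) : ℝ) * (0 / 3 - (-1) ^ 1 * π / 6) = π / 2 by
        push_cast; ring, Real.cos_pi_div_two]
    have hre : 0 < (saddleDirection 0 1).re := by
      rw [re_saddleDirection]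
      exact Real.cos_pos_of_mem_Ioo ⟨by linarith, by linarith⟩
    simp only [P_saddleBase_pow_three x 1, saddleDirection_zero_two]
    exact isBigO_P_sub_sub_of_re_pow_three_eq_zero x (norm_saddleDirection 1) hre hcube N
  · have hlt : (saddleDirection θ 1 ^ 4).re < (saddleDirection θ 2 ^ 4).re := by
      nlinarith [Real.sin_pos_of_pos_of_lt_pi (x := 4 * θ / 3) (by linarith) (by linarith)]
    have habs : |θ / 3 - (-1) ^ 2 * π / 6| < π / 6 := abs_lt.2 ⟨by linarith, by linarith⟩
    simp only [P_saddleBase_pow_three x 2]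
    simpa only [sub_right_comm] using isBigO_P_sub_sub_of_re_pow_four_lt x (norm_saddleDirection 1)
      (norm_saddleDirection 2) hlt (re_saddleDirection_pos 2 habs)
      (three_lt_four_mul_re_saddleDirection_sq 2 habs) N

theorem isBigO_P_saddleBase_sub_sub (hθ : |θ| < 3 * π / 4) (N : ℕ) :
    (fun R : ℝ ↦ P x (saddleBase θ R ^ 3) -
        E x (saddleBase θ R ^ 3) 1 * S x (saddleBase θ R ^ 3) 1 N -
        E x (saddleBase θ R ^ 3) 2 * S x (saddleBase θ R ^ 3) 2 N)
      =O[atTop] fun R : ℝ ↦ (‖E x (saddleBase θ R ^ 3) 1‖ + ‖E x (saddleBase θ R ^ 3) 2‖) *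
        (R ^ 2)⁻¹ ^ (N + 1) := by
  obtain ⟨hlower, hupper⟩ := abs_lt.1 hθ
  have harg {R : ℝ} (hR : 0 < R) : 3 * (saddleBase θ R).arg = θ := by
    rw [arg_saddleBase ⟨by linarith, by linarith⟩ hR]
    ring
  refine ((isBigO_P_sub_sub_saddleDirection x hθ N).congr' ?_ ?_).trans
    (isBigO_const_mul_self (2 : ℝ) _ _)
  all_goals
    filter_upwards [eventually_gt_atTop 0] with R hR
    have hlower' : -π < 3 * (saddleBase θ R).arg := by rw [harg hR]; linarith
    have hupper' : 3 * (saddleBase θ R).arg ≤ π := by rw [harg hR]; linarith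
  · simp only [E_mul_S_pow_three x _ hlower' hupper', saddlePoint_saddleBase]
  · simp only [norm_E_pow_three x _ hlower' hupper', saddlePoint_saddleBase]
    ring

theorem saddleBase_pow_three {r : ℝ} (hr : 0 ≤ r) :
    saddleBase θ (r ^ (1 / 3 : ℝ) / cbrtTwo ^ 2) ^ 3 = r * Complex.exp (Complex.I * θ) := by
  have hroot : (r ^ (1 / 3 : ℝ)) ^ 3 = r := by
    rw [← Real.rpow_mul_natCast hr]
    norm_num
  rw [saddleBase, mul_div_cancel₀ _ (pow_pos cbrtTwo_pos 2).ne', mul_pow, ← Complex.exp_nat_mul,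
    ← Complex.ofReal_pow, hroot]
  push_cast
  ring_nf

end Ray

theorem pearcey_asymptotic_case3_general (x : ℂ) (θ : ℝ) (hθ : |θ| < 3 * π / 4) (N : ℕ) :
    (fun r : ℝ =>
        P x ((r : ℂ) * Complex.exp (Complex.I * (θ : ℂ)))
          - E x ((r : ℂ) * Complex.exp (Complex.I * (θ : ℂ))) 1 *
              S x ((r : ℂ) * Complex.exp (Complex.I * (θ : ℂ))) 1 N
          - E x ((r : ℂ) * Complex.exp (Complex.I * (θ : ℂ))) 2 *
              S x ((r : ℂ) * Complex.exp (Complex.I * (θ : ℂ))) 2 N)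
      =O[atTop] fun r : ℝ =>
        (‖E x ((r : ℂ) * Complex.exp (Complex.I * (θ : ℂ))) 1‖ +
            ‖E x ((r : ℂ) * Complex.exp (Complex.I * (θ : ℂ))) 2‖) *
          r ^ (-(2 * ((N : ℝ) + 1)) / 3) := by
  have hscale : Tendsto (fun r : ℝ ↦ r ^ (1 / 3 : ℝ) / cbrtTwo ^ 2) atTop atTop :=
    (tendsto_rpow_atTop (by norm_num)).atTop_div_const (pow_pos cbrtTwo_pos 2)
  have hpower {r : ℝ} (hr : 0 ≤ r) : ((r ^ (1 / 3 : ℝ) / cbrtTwo ^ 2) ^ 2)⁻¹ ^ (N + 1) =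
      (cbrtTwo ^ 4) ^ (N + 1) * r ^ (-(2 * ((N : ℝ) + 1)) / 3) := by
    rw [div_pow, inv_div, ← Real.rpow_mul_natCast hr, div_pow, ← Real.rpow_mul_natCast hr,
      div_eq_mul_inv, ← Real.rpow_neg hr]
    push_cast
    ring_nf
  refine (((isBigO_P_saddleBase_sub_sub x hθ N).comp_tendsto hscale).congr' ?_ ?_).trans
    (isBigO_const_mul_self ((cbrtTwo ^ 4) ^ (N + 1)) _ _)
  all_goals
    filter_upwards [eventually_ge_atTop 0] with r hr
    simp only [Function.comp_apply, saddleBase_pow_three hr]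
  rw [hpower hr]
  ring

/-- Complete asymptotic expansion of `P(x,y)` for large `|y|` in the sector
`|arg y| ≤ π/8` (case 3): both saddle points contribute. -/
theorem pearcey_asymptotic_case3 (x : ℂ) (θ : ℝ)
    (hθ : θ ∈ Set.Icc (-(π / 8)) (π / 8)) (N : ℕ) :
    (fun r : ℝ =>
        P x ((r : ℂ) * Complex.exp (Complex.I * (θ : ℂ)))
          - E x ((r : ℂ) * Complex.exp (Complex.I * (θ : ℂ))) 1 *
              S x ((r : ℂ) * Complex.exp (Complex.I * (θ : ℂ))) 1 N
          - E x ((r : ℂ) * Complex.exp (Complex.I * (θ : ℂ))) 2 *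
              S x ((r : ℂ) * Complex.exp (Complex.I * (θ : ℂ))) 2 N)
      =O[atTop] fun r : ℝ =>
        (‖E x ((r : ℂ) * Complex.exp (Complex.I * (θ : ℂ))) 1‖ +
            ‖E x ((r : ℂ) * Complex.exp (Complex.I * (θ : ℂ))) 2‖) *
          r ^ (-(2 * ((N : ℝ) + 1)) / 3) := by
  have habs : |θ| ≤ π / 8 := abs_le.2 hθ
  exact pearcey_asymptotic_case3_general x θ (by linarith [pi_pos]) N
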